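/- arXiv:1712.09477 — 2 statements merged into one kernel-verified Lean document; each statement's English description precedes it below -/
import Mathlib

section
/- Let DS(L, P^core, R) be a double spider with deg(v_l) > deg(v_r) ≥ 3 such that R contains no path of even length and R contains at least one path of odd length at least 3. Then DS(L, P^core, R) is strongly antimagic. -/
open Classical

noncomputable section

/-- The vertex sum at `u` of an edge labeling `f`: the sum of the labels of the
edges incident to `u`. -/
def vertexSum {V : Type*} [Fintype V] (G : SimpleGraph V) (f : Sym2 V → ℕ) (u : V) : ℕ :=
  ∑ e ∈ G.incidenceFinset u, f e

/-- `f` is an antimagic labeling of `G`: it is a bijection from the edge set of `G`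
onto `{1, …, |E|}` and the vertex sums are pairwise distinct. -/
def IsAntimagicLabeling {V : Type*} [Fintype V] (G : SimpleGraph V)
    (f : Sym2 V → ℕ) : Prop :=
  Set.BijOn f G.edgeSet (Set.Icc 1 G.edgeFinset.card) ∧
  Function.Injective (vertexSum G f)

/-- `f` is a strongly antimagic labeling of `G`: it is an antimagic labeling and moreover
`deg u < deg v` implies `vertexSum u < vertexSum v`. -/
def IsStronglyAntimagicLabeling {V : Type*} [Fintype V] (G : SimpleGraph V)
    (f : Sym2 V → ℕ) : Prop :=
  Set.BijOn f G.edgeSet (Set.Icc 1 G.edgeFinset.card) ∧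
  Function.Injective (vertexSum G f) ∧
  ∀ u v : V, G.degree u < G.degree v → vertexSum G f u < vertexSum G f v

/-- `G` is antimagic if it admits an antimagic labeling. -/
def IsAntimagic {V : Type*} [Fintype V] (G : SimpleGraph V) : Prop :=
  ∃ f : Sym2 V → ℕ, IsAntimagicLabeling G f

/-- `G` is strongly antimagic if it admits a strongly antimagic labeling. -/
def IsStronglyAntimagic {V : Type*} [Fintype V] (G : SimpleGraph V) : Prop :=
  ∃ f : Sym2 V → ℕ, IsStronglyAntimagicLabeling G f

/-- The vertex type of a double spider: the core path has vertices `0, …, s`,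
and each leg of length `ℓ` (an entry of `L` or of `R`) contributes `ℓ` further
vertices, at distances `1, …, ℓ` from the branch vertex it is attached to. -/
abbrev DSVert (s : ℕ) (L R : List ℕ) : Type :=
  Fin (s + 1) ⊕ (((i : Fin L.length) × Fin (L.get i)) ⊕ ((i : Fin R.length) × Fin (R.get i)))

/-- The double spider `DS(L, Pᶜᵒʳᵉ, R)`: the core path `v_l = 0 — 1 — ⋯ — s = v_r`,
together with, for each entry `ℓ` of `L` (resp. of `R`), a leg which is a path of
length `ℓ` attached at `v_l` (resp. at `v_r`). -/
def DoubleSpider (s : ℕ) (L R : List ℕ) : SimpleGraph (DSVert s L R) :=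
  SimpleGraph.fromRel fun x y =>
    match x, y with
    | Sum.inl a, Sum.inl b => (b : ℕ) = (a : ℕ) + 1
    | Sum.inl a, Sum.inr (Sum.inl p) => (a : ℕ) = 0 ∧ (p.2 : ℕ) = 0
    | Sum.inl a, Sum.inr (Sum.inr p) => (a : ℕ) = s ∧ (p.2 : ℕ) = 0
    | Sum.inr (Sum.inl p), Sum.inr (Sum.inl q) => p.1 = q.1 ∧ (q.2 : ℕ) = (p.2 : ℕ) + 1
    | Sum.inr (Sum.inr p), Sum.inr (Sum.inr q) => p.1 = q.1 ∧ (q.2 : ℕ) = (p.2 : ℕ) + 1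
    | _, _ => False

/-- The branch vertex `v_l` of a double spider. -/
def vL (s : ℕ) (L R : List ℕ) : DSVert s L R := Sum.inl 0

/-- The branch vertex `v_r` of a double spider. -/
def vR (s : ℕ) (L R : List ℕ) : DSVert s L R := Sum.inl (Fin.last s)

/-!
Give the largest label to the edge at `v_r` of a longest right leg `i₀`. Concatenate all remaining
pieces in some order and label each of them alternately with the next small and the next large
label. Two consecutive labels then sum to a constant plus their position in the concatenation, so
the vertex sums at the vertices of degree two are distinct; every leaf edge gets a small label, so
the leaf sums are below all others. What remains is to place `φ(v_r)` above the sums of degree two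
and below `φ(v_l)`, and this is achieved by the order of the pieces.

If the core is odd, both of its end labels are large. Filling the right legs first, then the core,
then the left legs makes `φ(v_r)` large enough, while every right leg other than `i₀` is beaten by a
left leg filled after it, and the core label at `v_l` together with two left legs `D` and `E`,
filled last, make up for the largest label and the core label at `v_r`. If the core is even, its
label at `v_r` is small, and a second right leg `i₁` is filled late to keep `φ(v_r)` large; at `v_l`
this is offset by the core and three left legs `D`, `E` and `F`. In both cases `E` is a shortest
left leg, so that filling it last costs at most what another left leg `F`, filled earlier, has
gained.
-/

section PrefixSum

variable {P A : Type*} [Fintype P] [LinearOrder A] {M : Type*} [AddCommMonoid M]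

/-- The total weight of the elements that `pos` places strictly before `p`. -/
def prefixSum (pos : P → A) (w : P → M) (p : P) : M :=
  ∑ q with pos q < pos p, w q

variable {pos : P → A} {p q : P}

lemma prefixSum_add (v w : P → M) (p : P) :
    prefixSum pos v p + prefixSum pos w p = prefixSum pos (fun q ↦ v q + w q) p :=
  Finset.sum_add_distrib.symm

lemma prefixSum_eq_zero_of_forall_le (h : ∀ r, pos p ≤ pos r) (w : P → M) :
    prefixSum pos w p = 0 := by
  simp [prefixSum, (h _).not_gt]

lemma prefixSum_add_self (w : P → M) (p : P) :
    prefixSum pos w p + w p = ∑ r ∈ insert p ({r | pos r < pos p} : Finset P), w r := by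
  rw [Finset.sum_insert (by simp), add_comm, prefixSum]

lemma prefixSum_add_self_eq_prefixSum (hpos : Function.Injective pos) (hpq : pos p < pos q)
    (h : ∀ r, pos r ≤ pos p ∨ pos q ≤ pos r) (w : P → M) :
    prefixSum pos w p + w p = prefixSum pos w q := by
  have hlt (r) : pos r < pos q ↔ pos r ≤ pos p :=
    ⟨fun hr ↦ (h r).resolve_right hr.not_ge, fun hr ↦ hr.trans_lt hpq⟩
  rw [prefixSum_add_self, prefixSum]
  congr 1
  ext r
  simp [hlt, le_iff_eq_or_lt, hpos.eq_iff]

lemma prefixSum_add_self_eq_sum (hpos : Function.Injective pos) (h : ∀ r, pos r ≤ pos p)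
    (w : P → M) : prefixSum pos w p + w p = ∑ r, w r := by
  rw [prefixSum_add_self]
  congr 1
  ext r
  simpa [le_iff_eq_or_lt, hpos.eq_iff] using h r

variable [PartialOrder M] [CanonicallyOrderedAdd M]

lemma prefixSum_add_self_le_prefixSum (h : pos p < pos q) (w : P → M) :
    prefixSum pos w p + w p ≤ prefixSum pos w q := by
  rw [prefixSum_add_self, prefixSum]
  refine Finset.sum_le_sum_of_subset fun r hr ↦ ?_
  rw [Finset.mem_insert, Finset.mem_filter_univ] at hr
  rw [Finset.mem_filter_univ]
  rcases hr with rfl | hr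
  exacts [h, hr.trans h]

lemma prefixSum_add_self_le_sum [IsOrderedAddMonoid M] (pos : P → A) (w : P → M) (p : P) :
    prefixSum pos w p + w p ≤ ∑ r, w r := by
  rw [prefixSum_add_self]
  exact Finset.sum_le_univ_sum_of_nonneg fun _ ↦ zero_le

lemma eq_and_eq_of_prefixSum_add_eq (hpos : Function.Injective pos) {w : P → ℕ} {t u : ℕ}
    (ht : t < w p) (hu : u < w q) (h : prefixSum pos w p + t = prefixSum pos w q + u) :
    p = q ∧ t = u := by
  rcases lt_trichotomy (pos p) (pos q) with hpq | hpq | hpq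
  · have := prefixSum_add_self_le_prefixSum hpq w
    omega
  · obtain rfl := hpos hpq
    exact ⟨rfl, Nat.add_left_cancel h⟩
  · have := prefixSum_add_self_le_prefixSum hpq w
    omega

end PrefixSum

lemma exists_injective_refining {P : Type*} [Finite P] {A : Type*} [LinearOrder A] (rank : P → A) :
    ∃ pos : P → A ×ₗ ℕ, Function.Injective pos ∧ ∀ p q, rank p < rank q → pos p < pos q := by
  obtain ⟨index, hindex⟩ := Countable.exists_injective_nat P
  refine ⟨fun p ↦ toLex (rank p, index p), fun p q h ↦ hindex ?_, fun p q h ↦ ?_⟩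
  · exact congrArg (fun x ↦ (ofLex x).2) h
  · exact Prod.Lex.toLex_lt_toLex.mpr (Or.inl h)

lemma sum_le_sum_of_card_le_of_forall_le {ι κ M : Type*} [AddCommMonoid M] [LinearOrder M]
    [IsOrderedAddMonoid M] [CanonicallyOrderedAdd M] {I : Finset ι} {J : Finset κ} {x : ι → M}
    {y : κ → M} (hcard : I.card ≤ J.card) (h : ∀ i ∈ I, ∀ j ∈ J, x i ≤ y j) :
    ∑ i ∈ I, x i ≤ ∑ j ∈ J, y j := by
  obtain rfl | hJ := J.eq_empty_or_nonempty
  · simp [Finset.card_eq_zero.mp (Nat.le_zero.mp hcard)]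
  obtain ⟨j₀, hj₀, hmin⟩ := J.exists_min_image y hJ
  calc ∑ i ∈ I, x i ≤ I.card • y j₀ := Finset.sum_le_card_nsmul _ _ _ fun i hi ↦ h i hi j₀ hj₀
    _ ≤ J.card • y j₀ := nsmul_le_nsmul_left zero_le hcard
    _ ≤ ∑ j ∈ J, y j := Finset.card_nsmul_le_sum _ _ _ hmin

section Zigzag

/-- The number of positions `t' < t` of a zigzag of phase `d` that carry a small label, that is,
those with `t' + d` even. -/
def smallCount (d : Fin 2) (t : ℕ) : ℕ := (t + 1 - d) / 2

/-- The number of positions `t' < t` of a zigzag of phase `d` that carry a large label, that is,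
those with `t' + d` odd. -/
def largeCount (d : Fin 2) (t : ℕ) : ℕ := (t + d) / 2

lemma smallCount_add_largeCount (d : Fin 2) (t : ℕ) : smallCount d t + largeCount d t = t := by
  unfold smallCount largeCount
  omega

variable {P A : Type*} [Fintype P] [LinearOrder A] (pos : P → A) (n : P → ℕ) (d : P → Fin 2)

/-- The zigzag labeling of blocks `p` with positions `t < n p`: the position `t` of `p` is small if
`t + d p` is even and large otherwise. The small labels start at `1` and the large ones follow
them; each kind is handed out in increasing order along the concatenation of the blocks in the
order `pos`. -/
def zigzag (p : P) (t : ℕ) : ℕ :=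
  if Even (t + d p : ℕ) then
    prefixSum pos (fun q ↦ smallCount (d q) (n q)) p + smallCount (d p) t + 1
  else
    ∑ q, smallCount (d q) (n q) + prefixSum pos (fun q ↦ largeCount (d q) (n q)) p +
      largeCount (d p) t + 1

variable {pos n d} {p q : P} {t u : ℕ}

lemma zigzag_of_even (h : Even (t + d p : ℕ)) : zigzag pos n d p t =
    prefixSum pos (fun q ↦ smallCount (d q) (n q)) p + smallCount (d p) t + 1 :=
  if_pos h

lemma zigzag_of_odd (h : Odd (t + d p : ℕ)) : zigzag pos n d p t =
    ∑ q, smallCount (d q) (n q) + prefixSum pos (fun q ↦ largeCount (d q) (n q)) p +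
      largeCount (d p) t + 1 :=
  if_neg (Nat.not_even_iff_odd.mpr h)

lemma smallCount_lt_of_even {d : Fin 2} {m : ℕ} (h : Even (t + d : ℕ)) (ht : t < m) :
    smallCount d t < smallCount d m := by
  rw [Nat.even_iff] at h
  unfold smallCount
  omega

lemma largeCount_lt_of_odd {d : Fin 2} {m : ℕ} (h : Odd (t + d : ℕ)) (ht : t < m) :
    largeCount d t < largeCount d m := by
  rw [Nat.odd_iff] at h
  unfold largeCount
  omega

lemma zigzag_le_sum_smallCount (h : Even (t + d p : ℕ)) (ht : t < n p) :
    zigzag pos n d p t ≤ ∑ q, smallCount (d q) (n q) := by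
  have hlt := smallCount_lt_of_even h ht
  have hle := prefixSum_add_self_le_sum pos (fun q ↦ smallCount (d q) (n q)) p
  rw [zigzag_of_even h]
  omega

lemma sum_smallCount_lt_zigzag (h : Odd (t + d p : ℕ)) :
    ∑ q, smallCount (d q) (n q) < zigzag pos n d p t := by
  rw [zigzag_of_odd h]
  omega

lemma zigzag_pos : 0 < zigzag pos n d p t := by
  unfold zigzag
  split_ifs <;> exact Nat.succ_pos _

lemma sum_smallCount_add_sum_largeCount :
    ∑ q, smallCount (d q) (n q) + ∑ q, largeCount (d q) (n q) = ∑ q, n q := by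
  simp only [← Finset.sum_add_distrib, smallCount_add_largeCount]

lemma zigzag_le_sum (ht : t < n p) : zigzag pos n d p t ≤ ∑ q, n q := by
  have hsum := sum_smallCount_add_sum_largeCount (n := n) (d := d)
  rcases Nat.even_or_odd (t + d p : ℕ) with h | h
  · exact (zigzag_le_sum_smallCount h ht).trans (by omega)
  · have hlt := largeCount_lt_of_odd h ht
    have hle := prefixSum_add_self_le_sum pos (fun q ↦ largeCount (d q) (n q)) p
    rw [zigzag_of_odd h]
    omega

lemma eq_and_eq_of_zigzag_eq (hpos : Function.Injective pos) (ht : t < n p) (hu : u < n q)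
    (h : zigzag pos n d p t = zigzag pos n d q u) : p = q ∧ t = u := by
  rcases Nat.even_or_odd (t + d p : ℕ) with htp | htp <;>
    rcases Nat.even_or_odd (u + d q : ℕ) with huq | huq
  · rw [zigzag_of_even htp, zigzag_of_even huq, Nat.add_right_cancel_iff] at h
    obtain ⟨rfl, hcount⟩ := eq_and_eq_of_prefixSum_add_eq hpos
      (w := fun q ↦ smallCount (d q) (n q)) (smallCount_lt_of_even htp ht)
      (smallCount_lt_of_even huq hu) h
    rw [Nat.even_iff] at htp huq
    unfold smallCount at hcount
    exact ⟨rfl, by omega⟩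
  · exact absurd h ((zigzag_le_sum_smallCount htp ht).trans_lt (sum_smallCount_lt_zigzag huq)).ne
  · exact absurd h ((zigzag_le_sum_smallCount huq hu).trans_lt (sum_smallCount_lt_zigzag htp)).ne'
  · rw [zigzag_of_odd htp, zigzag_of_odd huq, Nat.add_right_cancel_iff, add_assoc, add_assoc,
      Nat.add_left_cancel_iff] at h
    obtain ⟨rfl, hcount⟩ := eq_and_eq_of_prefixSum_add_eq hpos
      (w := fun q ↦ largeCount (d q) (n q)) (largeCount_lt_of_odd htp ht)
      (largeCount_lt_of_odd huq hu) h
    rw [Nat.odd_iff] at htp huq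
    unfold largeCount at hcount
    exact ⟨rfl, by omega⟩

/- Consecutive positions carry one small and one large label, so the two prefix sums of counts add
up to the prefix sum of the lengths: the sum of the labels depends on the position in the
concatenation only. -/
lemma zigzag_add_zigzag_succ (pos : P → A) (n : P → ℕ) (d : P → Fin 2) (p : P) (t : ℕ) :
    zigzag pos n d p t + zigzag pos n d p (t + 1) =
      ∑ q, smallCount (d q) (n q) + (prefixSum pos n p + t) + 2 := by
  have hprefix : prefixSum pos (fun q ↦ smallCount (d q) (n q)) p +
      prefixSum pos (fun q ↦ largeCount (d q) (n q)) p = prefixSum pos n p := by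
    simp only [prefixSum_add, smallCount_add_largeCount]
  rcases Nat.even_or_odd (t + d p : ℕ) with h | h
  · have h' : Odd (t + 1 + d p : ℕ) := by rw [add_right_comm]; exact h.add_one
    rw [zigzag_of_even h, zigzag_of_odd h', ← hprefix]
    rw [Nat.even_iff] at h
    unfold smallCount largeCount
    omega
  · have h' : Even (t + 1 + d p : ℕ) := by rw [add_right_comm]; exact h.add_one
    rw [zigzag_of_odd h, zigzag_of_even h', ← hprefix]
    rw [Nat.odd_iff] at h
    unfold smallCount largeCount
    omega

end Zigzag

section EdgeParametrization

variable {V : Type*} [Fintype V] {G : SimpleGraph V}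

lemma degree_eq_vertexSum (u : V) : G.degree u = vertexSum G (fun _ ↦ 1) u := by
  rw [vertexSum, ← Finset.card_eq_sum_ones, SimpleGraph.card_incidenceFinset_eq_degree]

lemma isStronglyAntimagicLabeling_of_degree {f : Sym2 V → ℕ}
    (hmaps : Set.MapsTo f G.edgeSet (Set.Icc 1 G.edgeFinset.card)) (hinj : Set.InjOn f G.edgeSet)
    (hlt : ∀ u v, G.degree u < G.degree v → vertexSum G f u < vertexSum G f v)
    (heq : ∀ u v, G.degree u = G.degree v → vertexSum G f u = vertexSum G f v → u = v) :
    IsStronglyAntimagicLabeling G f := by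
  refine ⟨⟨hmaps, hinj, ?_⟩, fun u v h ↦ ?_, hlt⟩
  · rw [← SimpleGraph.coe_edgeFinset, ← Finset.coe_Icc] at hmaps ⊢
    rw [← SimpleGraph.coe_edgeFinset] at hinj
    exact Finset.surjOn_of_injOn_of_card_le f hmaps hinj (by simp)
  · rcases lt_trichotomy (G.degree u) (G.degree v) with hdeg | hdeg | hdeg
    · exact absurd h (hlt u v hdeg).ne
    · exact heq u v hdeg h
    · exact absurd h (hlt v u hdeg).ne'

variable {ι : Type*} [Fintype ι] {e : ι → Sym2 V}

lemma image_univ_eq_edgeFinset (hrange : Set.range e = G.edgeSet) :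
    Finset.univ.image e = G.edgeFinset := by
  rw [← Finset.coe_inj, Finset.coe_image, Finset.coe_univ, Set.image_univ,
    SimpleGraph.coe_edgeFinset, hrange]

lemma card_edgeFinset_eq (he : Function.Injective e) (hrange : Set.range e = G.edgeSet) :
    G.edgeFinset.card = Fintype.card ι := by
  rw [← image_univ_eq_edgeFinset hrange, Finset.card_image_of_injective _ he, Finset.card_univ]

lemma vertexSum_eq_sum_filter (he : Function.Injective e) (hrange : Set.range e = G.edgeSet)
    (f : Sym2 V → ℕ) (u : V) : vertexSum G f u = ∑ i with u ∈ e i, f (e i) := by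
  rw [vertexSum, SimpleGraph.incidenceFinset_eq_filter, ← image_univ_eq_edgeFinset hrange,
    Finset.filter_image, Finset.sum_image he.injOn]

end EdgeParametrization

namespace DoubleSpider

/-- The paths a double spider is made of: the core and the legs at `v_l` and `v_r`, indexed by `α`
and `β`. -/
inductive Piece (α β : Type*)
  | core
  | left (j : α)
  | right (i : β)

namespace Piece

variable {α β : Type*}

/-- The pieces as the disjoint union of the core and the two families of legs, for use in sums. -/
def equivOption : Piece α β ≃ Option (α ⊕ β) where
  toFun
    | core => none
    | left j => some (.inl j)
    | right i => some (.inr i)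
  invFun
    | none => core
    | some (.inl j) => left j
    | some (.inr i) => right i
  left_inv := by rintro (_ | _ | _) <;> rfl
  right_inv := by rintro (_ | _ | _) <;> rfl

variable [Fintype α] [Fintype β]

instance : Fintype (Piece α β) := Fintype.ofEquiv _ equivOption.symm

lemma sum_eq {M : Type*} [AddCommMonoid M] (w : Piece α β → M) :
    ∑ p, w p = w core + (∑ j, w (left j) + ∑ i, w (right i)) := by
  rw [← equivOption.symm.sum_comp, Fintype.sum_option, Fintype.sum_sum_type]
  rfl

end Piece

variable {α β : Type*}

/-- The number of edges of a piece, for a core of length `s` and legs of lengths `L` and `R`. -/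
def pieceLength (s : ℕ) (L : α → ℕ) (R : β → ℕ) : Piece α β → ℕ
  | .core => s
  | .left j => L j
  | .right i => R i

section Labels

variable [Fintype α] [Fintype β]

/-- The vertex sum at `v_l`, where `lab p j` is the label of the `j`-th edge of `p`, counted from
the branch vertex for a leg and from `v_l` for the core. -/
def leftSum (lab : Piece α β → ℕ → ℕ) : ℕ :=
  lab .core 0 + ∑ j, lab (.left j) 0

/-- The vertex sum at `v_r`, with the indexing of labels of `leftSum`. -/
def rightSum (s : ℕ) (lab : Piece α β → ℕ → ℕ) : ℕ :=
  lab .core (s - 1) + ∑ i, lab (.right i) 0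

/-- The arithmetic conditions under which an assignment of labels, indexed as in `leftSum`, is a
strongly antimagic labeling when `deg v_l > deg v_r ≥ 3`. The sum `lab p j + lab p (j + 1)` is the
vertex sum at an inner vertex of the piece `p`, and the last label of a leg is that at its leaf. -/
structure IsAdmissible (s : ℕ) (L : α → ℕ) (R : β → ℕ) (lab : Piece α β → ℕ → ℕ) : Prop where
  eq_of_label_eq {p q : Piece α β} {j k : ℕ} : j < pieceLength s L R p → k < pieceLength s L R q →
    lab p j = lab q k → p = q ∧ j = k
  label_mem {p : Piece α β} {j : ℕ} : j < pieceLength s L R p →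
    lab p j ∈ Set.Icc 1 (∑ q, pieceLength s L R q)
  leaf_lt_inner {p q : Piece α β} {j : ℕ} : p ≠ .core → j + 1 < pieceLength s L R q →
    lab p (pieceLength s L R p - 1) < lab q j + lab q (j + 1)
  leaf_lt_right {p : Piece α β} : p ≠ .core →
    lab p (pieceLength s L R p - 1) < rightSum s lab
  eq_of_inner_eq {p q : Piece α β} {j k : ℕ} :
    j + 1 < pieceLength s L R p → k + 1 < pieceLength s L R q →
    lab p j + lab p (j + 1) = lab q k + lab q (k + 1) → p = q ∧ j = k
  inner_lt_right {p : Piece α β} {j : ℕ} : j + 1 < pieceLength s L R p →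
    lab p j + lab p (j + 1) < rightSum s lab
  right_lt_left : rightSum s lab < leftSum lab

end Labels

/-- The phase of each piece in the zigzag, whose positions are counted from the leaf of a leg and
from `v_r` on the core. It makes the label at each leaf small and the core label at `v_l` large. -/
def phase (s : ℕ) : Piece α β → Fin 2
  | .core => Fin.ofNat 2 s
  | _ => 0

/-- The length of each piece once the first edge of the leg `i₀` is removed; that edge receives the
largest label and takes no part in the zigzag. -/
def trimmedLength (s : ℕ) (L : α → ℕ) (R : β → ℕ) (i₀ : β) : Piece α β → ℕ :=
  Function.update (pieceLength s L R) (.right i₀) (R i₀ - 1)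

/-- The number of edges of a piece with a small label in the zigzag. -/
def smallEdges (s : ℕ) (L : α → ℕ) (R : β → ℕ) (i₀ : β) (p : Piece α β) : ℕ :=
  smallCount (phase s p) (trimmedLength s L R i₀ p)

/-- The number of edges of a piece with a large label in the zigzag. -/
def largeEdges (s : ℕ) (L : α → ℕ) (R : β → ℕ) (i₀ : β) (p : Piece α β) : ℕ :=
  largeCount (phase s p) (trimmedLength s L R i₀ p)

section Counts

variable (s : ℕ) (L : α → ℕ) (R : β → ℕ) (i₀ : β)

@[simp] lemma trimmedLength_core : trimmedLength s L R i₀ .core = s := by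
  simp [trimmedLength, pieceLength]

@[simp] lemma trimmedLength_left (j : α) : trimmedLength s L R i₀ (.left j) = L j := by
  simp [trimmedLength, pieceLength]

@[simp] lemma trimmedLength_right_self : trimmedLength s L R i₀ (.right i₀) = R i₀ - 1 := by
  simp [trimmedLength]

variable {i₀} in
@[simp] lemma trimmedLength_right_of_ne {i : β} (hi : i ≠ i₀) :
    trimmedLength s L R i₀ (.right i) = R i := by
  simp [trimmedLength, pieceLength, hi]

@[simp] lemma smallEdges_left (j : α) : smallEdges s L R i₀ (.left j) = (L j + 1) / 2 := by
  simp [smallEdges, smallCount, phase]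

@[simp] lemma smallEdges_right_self (h : 0 < R i₀) :
    smallEdges s L R i₀ (.right i₀) = R i₀ / 2 := by
  simp [smallEdges, smallCount, phase, Nat.sub_add_cancel h]

variable {i₀} in
@[simp] lemma smallEdges_right_of_ne {i : β} (hi : i ≠ i₀) :
    smallEdges s L R i₀ (.right i) = (R i + 1) / 2 := by
  simp [smallEdges, smallCount, phase, hi]

@[simp] lemma largeEdges_core : largeEdges s L R i₀ .core = (s + 1) / 2 := by
  simp only [largeEdges, largeCount, trimmedLength_core, phase, Fin.ofNat_eq_cast,
    Fin.val_natCast]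
  omega

@[simp] lemma largeEdges_left (j : α) : largeEdges s L R i₀ (.left j) = L j / 2 := by
  simp [largeEdges, largeCount, phase]

@[simp] lemma largeEdges_right_self : largeEdges s L R i₀ (.right i₀) = (R i₀ - 1) / 2 := by
  simp [largeEdges, largeCount, phase]

variable {i₀} in
@[simp] lemma largeEdges_right_of_ne {i : β} (hi : i ≠ i₀) :
    largeEdges s L R i₀ (.right i) = R i / 2 := by
  simp [largeEdges, largeCount, phase, hi]

variable {s L R i₀} in
lemma pieceLength_sub_lt_trimmedLength {p : Piece α β} {j : ℕ}
    (h : ¬(p = .right i₀ ∧ j = 0)) (hj : j < pieceLength s L R p) :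
    pieceLength s L R p - 1 - j < trimmedLength s L R i₀ p := by
  by_cases hp : p = .right i₀
  · subst hp
    rw [trimmedLength_right_self]
    simp only [pieceLength] at hj ⊢
    simp only [true_and] at h
    omega
  · rw [trimmedLength, Function.update_of_ne hp]
    omega

variable [Fintype α] [Fintype β]

lemma sum_pieceLength (h : 0 < R i₀) :
    ∑ p, pieceLength s L R p = ∑ p, trimmedLength s L R i₀ p + 1 := by
  have hupdate := Finset.sum_update_of_mem (Finset.mem_univ (.right i₀)) (pieceLength s L R)
    (R i₀ - 1)
  rw [trimmedLength, hupdate, ← Finset.add_sum_erase _ _ (Finset.mem_univ (.right i₀)),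
    Finset.sdiff_singleton_eq_erase]
  simp only [pieceLength]
  omega

lemma sum_pieceLength_eq_sum_smallEdges_add (h : 0 < R i₀) : ∑ p, pieceLength s L R p =
    ∑ p, smallEdges s L R i₀ p + ∑ p, largeEdges s L R i₀ p + 1 := by
  rw [sum_pieceLength s L R i₀ h, ← sum_smallCount_add_sum_largeCount (d := phase s)]
  rfl

end Counts

section Label

variable [Fintype α] [Fintype β] {A : Type*} [LinearOrder A]

/-- The labeling of the double spider: the edge at `v_r` of the leg `i₀` receives the largest label,
and all other edges are labelled by the zigzag, read from the far end of each piece. -/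
def label (s : ℕ) (L : α → ℕ) (R : β → ℕ) (i₀ : β) (pos : Piece α β → A) (p : Piece α β)
    (j : ℕ) : ℕ :=
  if p = .right i₀ ∧ j = 0 then ∑ q, pieceLength s L R q
  else zigzag pos (trimmedLength s L R i₀) (phase s) p (pieceLength s L R p - 1 - j)

variable {s : ℕ} {L : α → ℕ} {R : β → ℕ} {i₀ : β} {pos : Piece α β → A} {p q : Piece α β}
  {j k : ℕ}

lemma label_right_self_zero : label s L R i₀ pos (.right i₀) 0 = ∑ q, pieceLength s L R q :=
  if_pos ⟨rfl, rfl⟩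

lemma label_of_not_top (h : ¬(p = .right i₀ ∧ j = 0)) : label s L R i₀ pos p j =
    zigzag pos (trimmedLength s L R i₀) (phase s) p (pieceLength s L R p - 1 - j) :=
  if_neg h

lemma label_le_sum_trimmedLength (h : ¬(p = .right i₀ ∧ j = 0)) (hj : j < pieceLength s L R p) :
    label s L R i₀ pos p j ≤ ∑ q, trimmedLength s L R i₀ q := by
  rw [label_of_not_top h]
  exact zigzag_le_sum (pieceLength_sub_lt_trimmedLength h hj)

lemma label_mem_Icc (h₀ : 0 < R i₀) (hj : j < pieceLength s L R p) :
    label s L R i₀ pos p j ∈ Set.Icc 1 (∑ q, pieceLength s L R q) := by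
  have hsum := sum_pieceLength s L R i₀ h₀
  by_cases h : p = .right i₀ ∧ j = 0
  · obtain ⟨rfl, rfl⟩ := h
    rw [label_right_self_zero]
    exact ⟨by omega, le_rfl⟩
  · have hle := label_le_sum_trimmedLength (pos := pos) h hj
    rw [label_of_not_top h] at hle ⊢
    exact ⟨zigzag_pos, by omega⟩

lemma eq_and_eq_of_label_eq (hpos : Function.Injective pos) (h₀ : 0 < R i₀)
    (hj : j < pieceLength s L R p) (hk : k < pieceLength s L R q)
    (h : label s L R i₀ pos p j = label s L R i₀ pos q k) : p = q ∧ j = k := by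
  have hsum := sum_pieceLength s L R i₀ h₀
  by_cases htop : p = .right i₀ ∧ j = 0 <;> by_cases htop' : q = .right i₀ ∧ k = 0
  · exact ⟨htop.1.trans htop'.1.symm, htop.2.trans htop'.2.symm⟩
  · obtain ⟨rfl, rfl⟩ := htop
    have hle := label_le_sum_trimmedLength (pos := pos) htop' hk
    rw [label_right_self_zero] at h
    omega
  · obtain ⟨rfl, rfl⟩ := htop'
    have hle := label_le_sum_trimmedLength (pos := pos) htop hj
    rw [label_right_self_zero] at h
    omega
  · rw [label_of_not_top htop, label_of_not_top htop'] at h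
    obtain ⟨rfl, ht⟩ := eq_and_eq_of_zigzag_eq hpos (pieceLength_sub_lt_trimmedLength htop hj)
      (pieceLength_sub_lt_trimmedLength htop' hk) h
    exact ⟨rfl, by omega⟩

lemma leaf_label_le (hlen : 0 < pieceLength s L R p) (h₀ : 1 < R i₀) (hp : p ≠ .core) :
    label s L R i₀ pos p (pieceLength s L R p - 1) ≤ ∑ q, smallEdges s L R i₀ q := by
  have h : ¬(p = .right i₀ ∧ pieceLength s L R p - 1 = 0) := by
    rintro ⟨rfl, h⟩
    simp only [pieceLength] at h
    omega
  have hlt := pieceLength_sub_lt_trimmedLength h (Nat.sub_one_lt hlen.ne')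
  rw [Nat.sub_self] at hlt
  rw [label_of_not_top h, Nat.sub_self]
  refine zigzag_le_sum_smallCount ?_ hlt
  cases p <;> simp_all [phase]

lemma label_add_label_succ (h : ¬(p = .right i₀ ∧ j = 0)) (hj : j + 1 < pieceLength s L R p) :
    label s L R i₀ pos p j + label s L R i₀ pos p (j + 1) = ∑ q, smallEdges s L R i₀ q +
      (prefixSum pos (trimmedLength s L R i₀) p + (pieceLength s L R p - 2 - j)) + 2 := by
  have hj' : pieceLength s L R p - 1 - j = pieceLength s L R p - 2 - j + 1 := by omega
  have hsucc : pieceLength s L R p - 1 - (j + 1) = pieceLength s L R p - 2 - j := by omega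
  rw [label_of_not_top h, label_of_not_top (by simp), hj', hsucc, add_comm,
    zigzag_add_zigzag_succ]
  rfl

lemma label_add_label_succ_le (h : ¬(p = .right i₀ ∧ j = 0))
    (hj : j + 1 < pieceLength s L R p) :
    label s L R i₀ pos p j + label s L R i₀ pos p (j + 1) ≤
      ∑ q, smallEdges s L R i₀ q + ∑ q, trimmedLength s L R i₀ q := by
  have hlt := pieceLength_sub_lt_trimmedLength h (Nat.lt_of_succ_lt hj)
  have hle := prefixSum_add_self_le_sum pos (trimmedLength s L R i₀) p
  rw [label_add_label_succ h hj]
  omega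

lemma trimmed_zigzag_of_even {t : ℕ} (h : Even (t + phase s p : ℕ)) :
    zigzag pos (trimmedLength s L R i₀) (phase s) p t =
      prefixSum pos (smallEdges s L R i₀) p + smallCount (phase s p) t + 1 :=
  zigzag_of_even h

lemma trimmed_zigzag_of_odd {t : ℕ} (h : Odd (t + phase s p : ℕ)) :
    zigzag pos (trimmedLength s L R i₀) (phase s) p t = ∑ q, smallEdges s L R i₀ q +
      prefixSum pos (largeEdges s L R i₀) p + largeCount (phase s p) t + 1 :=
  zigzag_of_odd h

lemma label_top_add_label (hodd : Odd (R i₀)) (h₀ : 1 < R i₀) :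
    label s L R i₀ pos (.right i₀) 0 + label s L R i₀ pos (.right i₀) 1 =
      ∑ q, pieceLength s L R q + (∑ q, smallEdges s L R i₀ q +
        (prefixSum pos (largeEdges s L R i₀) (.right i₀) + largeEdges s L R i₀ (.right i₀))) := by
  rw [Nat.odd_iff] at hodd
  have hparity : Odd (R i₀ - 1 - 1 + (phase s (.right i₀ : Piece α β) : ℕ)) := by
    rw [Nat.odd_iff]
    simp only [phase, Fin.val_zero]
    omega
  rw [label_right_self_zero, label_of_not_top (by simp), pieceLength, trimmed_zigzag_of_odd hparity,
    largeEdges_right_self]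
  simp only [largeCount, phase, Fin.val_zero]
  omega

lemma eq_and_eq_of_label_add_label_succ_eq (hpos : Function.Injective pos) (hodd : Odd (R i₀))
    (h₀ : 1 < R i₀) (hj : j + 1 < pieceLength s L R p) (hk : k + 1 < pieceLength s L R q)
    (h : label s L R i₀ pos p j + label s L R i₀ pos p (j + 1) =
      label s L R i₀ pos q k + label s L R i₀ pos q (k + 1)) : p = q ∧ j = k := by
  have hsum := sum_pieceLength s L R i₀ (Nat.zero_lt_of_lt h₀)
  have htop := label_top_add_label (s := s) (L := L) (pos := pos) hodd h₀
  by_cases hp : p = .right i₀ ∧ j = 0 <;> by_cases hq : q = .right i₀ ∧ k = 0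
  · exact ⟨hp.1.trans hq.1.symm, hp.2.trans hq.2.symm⟩
  · obtain ⟨rfl, rfl⟩ := hp
    have hle := label_add_label_succ_le (pos := pos) hq hk
    rw [zero_add] at h
    omega
  · obtain ⟨rfl, rfl⟩ := hq
    have hle := label_add_label_succ_le (pos := pos) hp hj
    rw [zero_add] at h
    omega
  · have hlt := pieceLength_sub_lt_trimmedLength hp (Nat.lt_of_succ_lt hj)
    have hlt' := pieceLength_sub_lt_trimmedLength hq (Nat.lt_of_succ_lt hk)
    rw [label_add_label_succ hp hj, label_add_label_succ hq hk, Nat.add_right_cancel_iff,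
      Nat.add_left_cancel_iff] at h
    obtain ⟨rfl, -⟩ := eq_and_eq_of_prefixSum_add_eq hpos (w := trimmedLength s L R i₀)
      (by omega) (by omega) h
    exact ⟨rfl, by omega⟩

/- The largest inner vertex sum occurs next to `v_r` on the leg `i₀`. -/
lemma isAdmissible_label (hpos : Function.Injective pos) (hL : ∀ j, 0 < L j)
    (hodd : ∀ i, Odd (R i)) (h₀ : 1 < R i₀)
    (hinner : label s L R i₀ pos (.right i₀) 0 + label s L R i₀ pos (.right i₀) 1 <
      rightSum s (label s L R i₀ pos))
    (hbranch : rightSum s (label s L R i₀ pos) < leftSum (label s L R i₀ pos)) :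
    IsAdmissible s L R (label s L R i₀ pos) := by
  have hsum := sum_pieceLength s L R i₀ (Nat.zero_lt_of_lt h₀)
  have htop := label_top_add_label (s := s) (L := L) (pos := pos) (hodd i₀) h₀
  have hleaf {p : Piece α β} (hp : p ≠ .core) :
      label s L R i₀ pos p (pieceLength s L R p - 1) ≤ ∑ q, smallEdges s L R i₀ q := by
    refine leaf_label_le ?_ h₀ hp
    cases p with
    | core => exact absurd rfl hp
    | left j => exact hL j
    | right i => exact (hodd i).pos
  refine
    { eq_of_label_eq := eq_and_eq_of_label_eq hpos (Nat.zero_lt_of_lt h₀)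
      label_mem := label_mem_Icc (Nat.zero_lt_of_lt h₀)
      leaf_lt_inner := fun {p q j} hp hj ↦ ?_
      leaf_lt_right := fun hp ↦ (hleaf hp).trans_lt (by omega)
      eq_of_inner_eq := eq_and_eq_of_label_add_label_succ_eq hpos (hodd i₀) h₀
      inner_lt_right := fun {p j} hj ↦ ?_
      right_lt_left := hbranch }
  · have hle := hleaf hp
    by_cases h : q = .right i₀ ∧ j = 0
    · obtain ⟨rfl, rfl⟩ := h
      rw [zero_add]
      omega
    · have heq := label_add_label_succ (pos := pos) h hj
      omega
  · by_cases h : p = .right i₀ ∧ j = 0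
    · obtain ⟨rfl, rfl⟩ := h
      exact hinner
    · have hle := label_add_label_succ_le (pos := pos) h hj
      omega

lemma label_core_zero (hs : 0 < s) : label s L R i₀ pos .core 0 = ∑ q, smallEdges s L R i₀ q +
    (prefixSum pos (largeEdges s L R i₀) .core + largeEdges s L R i₀ .core) := by
  have hphase : (phase s (.core : Piece α β) : ℕ) = s % 2 := by simp [phase]
  have hparity : Odd (s - 1 + (phase s (.core : Piece α β) : ℕ)) := by
    rw [hphase, Nat.odd_iff]
    omega
  rw [label_of_not_top (by simp), pieceLength, Nat.sub_zero, trimmed_zigzag_of_odd hparity,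
    largeEdges_core, largeCount, hphase]
  omega

lemma label_core_last_of_even (hs : Even s) :
    label s L R i₀ pos .core (s - 1) = prefixSum pos (smallEdges s L R i₀) .core + 1 := by
  have hphase : (phase s (.core : Piece α β) : ℕ) = 0 := by simp [phase, Nat.even_iff.mp hs]
  rw [label_of_not_top (by simp), pieceLength, Nat.sub_self,
    trimmed_zigzag_of_even (by simp [hphase])]
  simp only [smallCount, hphase, Nat.sub_zero, Nat.reduceAdd, Nat.reduceDiv, add_zero]

lemma label_core_last_of_odd (hs : Odd s) : label s L R i₀ pos .core (s - 1) =
    ∑ q, smallEdges s L R i₀ q + prefixSum pos (largeEdges s L R i₀) .core + 1 := by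
  have hphase : (phase s (.core : Piece α β) : ℕ) = 1 := by simp [phase, Nat.odd_iff.mp hs]
  rw [label_of_not_top (by simp), pieceLength, Nat.sub_self,
    trimmed_zigzag_of_odd (by simp [hphase])]
  simp only [largeCount, hphase, Nat.reduceAdd, Nat.reduceDiv, add_zero]

lemma label_right_zero_of_ne {i : β} (hi : i ≠ i₀) (hodd : Odd (R i)) :
    label s L R i₀ pos (.right i) 0 =
      prefixSum pos (smallEdges s L R i₀) (.right i) + smallEdges s L R i₀ (.right i) := by
  rw [Nat.odd_iff] at hodd
  have hparity : Even (R i - 1 + (phase s (.right i : Piece α β) : ℕ)) := by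
    rw [Nat.even_iff]
    simp only [phase, Fin.val_zero]
    omega
  rw [label_of_not_top (by simpa using hi), pieceLength, Nat.sub_zero,
    trimmed_zigzag_of_even hparity, smallEdges_right_of_ne _ _ _ hi]
  simp only [smallCount, phase, Fin.val_zero]
  omega

lemma label_left_zero {j : α} (hj : 0 < L j) : label s L R i₀ pos (.left j) 0 =
    if Odd (L j) then
      prefixSum pos (smallEdges s L R i₀) (.left j) + smallEdges s L R i₀ (.left j)
    else ∑ q, smallEdges s L R i₀ q +
      (prefixSum pos (largeEdges s L R i₀) (.left j) + largeEdges s L R i₀ (.left j)) := by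
  have hphase : (phase s (.left j : Piece α β) : ℕ) = 0 := rfl
  rw [label_of_not_top (by simp), pieceLength, Nat.sub_zero, smallEdges_left, largeEdges_left]
  split_ifs with h <;> rw [Nat.odd_iff] at h
  · rw [trimmed_zigzag_of_even (by rw [Nat.even_iff]; omega), smallCount, hphase]
    omega
  · rw [trimmed_zigzag_of_odd (by rw [Nat.odd_iff]; omega), largeCount, hphase]
    omega

lemma prefixSum_add_smallEdges_le_label_left {j : α} (hj : 0 < L j) :
    prefixSum pos (smallEdges s L R i₀) (.left j) + smallEdges s L R i₀ (.left j) ≤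
      label s L R i₀ pos (.left j) 0 := by
  have hle := prefixSum_add_self_le_sum pos (smallEdges s L R i₀) (.left j)
  rw [label_left_zero hj]
  split_ifs
  · exact le_rfl
  · omega

lemma prefixSum_add_largeEdges_lt_label_left {j : α} (hj : 0 < L j) :
    prefixSum pos (smallEdges s L R i₀) (.left j) + largeEdges s L R i₀ (.left j) <
      label s L R i₀ pos (.left j) 0 := by
  have hle := prefixSum_add_self_le_sum pos (smallEdges s L R i₀) (.left j)
  rw [smallEdges_left] at hle
  rw [label_left_zero hj, smallEdges_left, largeEdges_left]
  split_ifs with h <;> rw [Nat.odd_iff] at h <;> omega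

end Label

section OddCore

/-- The order in which the pieces are filled when the core is odd: right legs, core, left legs. -/
def oddCoreRank (D E : α) : Piece α β → ℕ
  | .right _ => 0
  | .core => 1
  | .left j => if j = E then 4 else if j = D then 3 else 2

lemma one_lt_oddCoreRank_left (D E j : α) : 1 < oddCoreRank D E (.left j : Piece α β) := by
  rw [oddCoreRank]
  split_ifs <;> omega

variable [Fintype α] [Fintype β] {A : Type*} [LinearOrder A] {s : ℕ} {L : α → ℕ} {R : β → ℕ}
  {D E F : α} {i₀ : β} {pos : Piece α β → A}
  (hrank : ∀ p q, oddCoreRank D E p < oddCoreRank D E q → pos p < pos q)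
include hrank

lemma prefixSum_core_of_oddCoreRank (w : Piece α β → ℕ) :
    prefixSum pos w .core = ∑ i, w (.right i) := by
  have hleft (j : α) : pos .core < pos (.left j) := hrank _ _ (one_lt_oddCoreRank_left D E j)
  have hright (i : β) : pos (.right i) < pos .core := hrank _ _ Nat.zero_lt_one
  rw [prefixSum, Finset.sum_filter, Piece.sum_eq]
  simp [(hleft _).not_gt, hright]

lemma prefixSum_largeEdges_core_le (h₀ : 0 < R i₀) :
    prefixSum pos (largeEdges s L R i₀) .core ≤ prefixSum pos (smallEdges s L R i₀) .core := by
  rw [prefixSum_core_of_oddCoreRank hrank, prefixSum_core_of_oddCoreRank hrank]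
  refine Finset.sum_le_sum fun i _ ↦ ?_
  by_cases hi : i = i₀
  · subst hi
    rw [largeEdges_right_self, smallEdges_right_self _ _ _ _ h₀]
    omega
  · rw [largeEdges_right_of_ne _ _ _ hi, smallEdges_right_of_ne _ _ _ hi]
    omega

lemma sum_smallEdges_add_prefixSum_core_le (hpos : Function.Injective pos) (h₀ : 0 < R i₀)
    (hDE : D ≠ E) (hFD : F ≠ D) (hFE : F ≠ E) (hEF : L E ≤ L F) :
    ∑ q, smallEdges s L R i₀ q + prefixSum pos (largeEdges s L R i₀) .core ≤
      prefixSum pos (smallEdges s L R i₀) (.left E) +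
        prefixSum pos (smallEdges s L R i₀) (.left D) := by
  have hlast := prefixSum_add_self_eq_sum (p := .left E) hpos
    (fun r ↦ by
      by_cases hr : r = .left E
      · rw [hr]
      · refine (hrank _ _ ?_).le
        rcases r with _ | j | i <;> simp [oddCoreRank]
        grind) (smallEdges s L R i₀)
  have hcore := prefixSum_largeEdges_core_le (s := s) (L := L) hrank h₀
  have hcoreF := prefixSum_add_self_le_prefixSum (p := .core) (q := .left F)
    (hrank _ _ (by simp [oddCoreRank, hFE, hFD])) (smallEdges s L R i₀)
  have hFD' := prefixSum_add_self_le_prefixSum (p := .left F) (q := .left D)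
    (hrank _ _ (by simp [oddCoreRank, hFE, hFD, hDE])) (smallEdges s L R i₀)
  rw [smallEdges_left] at hlast hFD'
  omega

lemma sum_label_right_le_of_oddCoreRank (hcard : Fintype.card β < Fintype.card α)
    (hodd : ∀ i, Odd (R i)) (hDE : D ≠ E) :
    ∑ i ∈ {i₀}ᶜ, label s L R i₀ pos (.right i) 0 ≤
      ∑ j ∈ {E, D}ᶜ, prefixSum pos (smallEdges s L R i₀) (.left j) := by
  refine sum_le_sum_of_card_le_of_forall_le ?_ fun i hi j _ ↦ ?_
  · rw [Finset.card_compl, Finset.card_compl, Finset.card_pair hDE.symm, Finset.card_singleton]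
    omega
  · rw [label_right_zero_of_ne (by simpa using hi) (hodd i)]
    refine prefixSum_add_self_le_prefixSum (hrank _ _ ?_) _
    exact one_pos.trans (one_lt_oddCoreRank_left D E j)

lemma rightSum_lt_leftSum_of_oddCoreRank (hpos : Function.Injective pos) (hs : Odd s)
    (hcard : Fintype.card β < Fintype.card α) (hL : ∀ j, 0 < L j)
    (hodd : ∀ i, Odd (R i)) (hDE : D ≠ E) (hFD : F ≠ D) (hFE : F ≠ E) (hEF : L E ≤ L F) :
    rightSum s (label s L R i₀ pos) < leftSum (label s L R i₀ pos) := by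
  have hpieces := sum_pieceLength_eq_sum_smallEdges_add s L R i₀ (hodd i₀).pos
  rw [Piece.sum_eq (largeEdges s L R i₀)] at hpieces
  have hbound := sum_smallEdges_add_prefixSum_core_le (s := s) hrank hpos (hodd i₀).pos
    hDE hFD hFE hEF
  have hmatch := sum_label_right_le_of_oddCoreRank (s := s) (L := L) (i₀ := i₀) hrank hcard hodd hDE
  have hright := Finset.sum_add_sum_compl {i₀} fun i ↦ label s L R i₀ pos (.right i) 0
  have hleft := Finset.sum_add_sum_compl {E, D} fun j ↦
    prefixSum pos (smallEdges s L R i₀) (.left j)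
  have htop : ∑ j, (prefixSum pos (smallEdges s L R i₀) (.left j) +
      largeEdges s L R i₀ (.left j) + 1) ≤ ∑ j, label s L R i₀ pos (.left j) 0 :=
    Finset.sum_le_sum fun j _ ↦ prefixSum_add_largeEdges_lt_label_left (hL j)
  have hthree : 3 ≤ Fintype.card α := by
    rw [← Finset.card_eq_three.mpr ⟨D, E, F, hDE, hFD.symm, hFE.symm, rfl⟩]
    exact Finset.card_le_univ _
  rw [Finset.sum_add_distrib, Finset.sum_add_distrib, ← Finset.card_eq_sum_ones,
    Finset.card_univ] at htop
  rw [Finset.sum_singleton, label_right_self_zero] at hright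
  rw [Finset.sum_pair hDE.symm] at hleft
  rw [rightSum, leftSum, label_core_last_of_odd hs, label_core_zero hs.pos]
  rw [prefixSum_core_of_oddCoreRank hrank (largeEdges s L R i₀)] at hbound ⊢
  omega

lemma isAdmissible_label_of_oddCoreRank (hpos : Function.Injective pos) (hs : Odd s)
    (hcard : Fintype.card β < Fintype.card α) (hL : ∀ j, 0 < L j) (hodd : ∀ i, Odd (R i))
    (h₀ : 1 < R i₀) (hDE : D ≠ E) (hFD : F ≠ D) (hFE : F ≠ E) (hEF : L E ≤ L F) :
    IsAdmissible s L R (label s L R i₀ pos) := by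
  refine isAdmissible_label hpos hL hodd h₀ ?_
    (rightSum_lt_leftSum_of_oddCoreRank hrank hpos hs hcard hL hodd hDE hFD hFE hEF)
  have hcore := prefixSum_add_self_le_prefixSum (p := .right i₀) (q := .core)
    (hrank _ _ (by simp [oddCoreRank])) (largeEdges s L R i₀)
  have htop := Finset.single_le_sum (f := fun i ↦ label s L R i₀ pos (.right i) 0)
    (fun _ _ ↦ Nat.zero_le _) (Finset.mem_univ i₀)
  rw [label_right_self_zero] at htop
  rw [label_top_add_label (hodd i₀) h₀, rightSum, label_core_last_of_odd hs]
  omega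

end OddCore

section EvenCore

/-- The order in which the pieces are filled when the core is even. The core label at `v_r` is then
small, and the late leg `i₁` makes up for it; the left legs `D` and `E` keep `v_l` ahead. -/
def evenCoreRank (i₀ i₁ : β) (D E : α) : Piece α β → ℕ
  | .right i => if i = i₀ then 0 else if i = i₁ then 5 else 1
  | .core => 3
  | .left j => if j = E then 6 else if j = D then 4 else 2

variable {A : Type*} [LinearOrder A] {s : ℕ} {L : α → ℕ} {R : β → ℕ} {D E F : α} {i₀ i₁ : β}
  {pos : Piece α β → A}
  (hrank : ∀ p q, evenCoreRank i₀ i₁ D E p < evenCoreRank i₀ i₁ D E q → pos p < pos q)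
include hrank

lemma pos_le_of_evenCoreRank {p q : Piece α β}
    (h : p = q ∨ evenCoreRank i₀ i₁ D E p < evenCoreRank i₀ i₁ D E q) : pos p ≤ pos q := by
  rcases h with rfl | h
  exacts [le_rfl, (hrank p q h).le]

variable [Fintype α] [Fintype β]

lemma prefixSum_right_self_of_evenCoreRank (w : Piece α β → ℕ) :
    prefixSum pos w (.right i₀) = 0 := by
  refine prefixSum_eq_zero_of_forall_le (fun r ↦ pos_le_of_evenCoreRank hrank ?_) w
  rcases r with _ | j | i <;> grind [evenCoreRank]

lemma prefixSum_core_add_self (hpos : Function.Injective pos) (hDE : D ≠ E) (w : Piece α β → ℕ) :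
    prefixSum pos w .core + w .core = prefixSum pos w (.left D) := by
  refine prefixSum_add_self_eq_prefixSum hpos (hrank _ _ (by simp [evenCoreRank, hDE]))
    (fun r ↦ Or.imp (pos_le_of_evenCoreRank hrank) (pos_le_of_evenCoreRank hrank) ?_) w
  rcases r with _ | j | i <;> grind [evenCoreRank]

lemma prefixSum_left_add_self (hpos : Function.Injective pos) (hDE : D ≠ E) (hi : i₁ ≠ i₀)
    (w : Piece α β → ℕ) :
    prefixSum pos w (.left D) + w (.left D) = prefixSum pos w (.right i₁) := by
  refine prefixSum_add_self_eq_prefixSum hpos (hrank _ _ (by simp [evenCoreRank, hDE, hi]))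
    (fun r ↦ Or.imp (pos_le_of_evenCoreRank hrank) (pos_le_of_evenCoreRank hrank) ?_) w
  rcases r with _ | j | i <;> grind [evenCoreRank]

lemma prefixSum_right_add_self (hpos : Function.Injective pos) (hi : i₁ ≠ i₀)
    (w : Piece α β → ℕ) :
    prefixSum pos w (.right i₁) + w (.right i₁) = prefixSum pos w (.left E) := by
  refine prefixSum_add_self_eq_prefixSum hpos (hrank _ _ (by simp [evenCoreRank, hi]))
    (fun r ↦ Or.imp (pos_le_of_evenCoreRank hrank) (pos_le_of_evenCoreRank hrank) ?_) w
  rcases r with _ | j | i <;> grind [evenCoreRank]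

lemma prefixSum_left_add_self_eq_sum (hpos : Function.Injective pos) (w : Piece α β → ℕ) :
    prefixSum pos w (.left E) + w (.left E) = ∑ p, w p := by
  refine prefixSum_add_self_eq_sum hpos (fun r ↦ pos_le_of_evenCoreRank hrank ?_) w
  rcases r with _ | j | i <;> grind [evenCoreRank]

lemma right_self_le_prefixSum_left (hFD : F ≠ D) (hFE : F ≠ E) (w : Piece α β → ℕ) :
    w (.right i₀) ≤ prefixSum pos w (.left F) := by
  have hle := prefixSum_add_self_le_prefixSum (p := .right i₀) (q := .left F)
    (hrank _ _ (by simp [evenCoreRank, hFD, hFE])) w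
  omega

lemma inner_lt_rightSum_of_evenCoreRank (hpos : Function.Injective pos) (hs : Even s)
    (hodd : ∀ i, Odd (R i)) (h₀ : 1 < R i₀) (hi : i₁ ≠ i₀) (hFD : F ≠ D) (hFE : F ≠ E)
    (hEF : L E ≤ L F) :
    label s L R i₀ pos (.right i₀) 0 + label s L R i₀ pos (.right i₀) 1 <
      rightSum s (label s L R i₀ pos) := by
  have hF := right_self_le_prefixSum_left hrank hFD hFE (smallEdges s L R i₀)
  have hcore := prefixSum_add_self_le_prefixSum (p := .left F) (q := .core)
    (hrank _ _ (by simp [evenCoreRank, hFD, hFE])) (smallEdges s L R i₀)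
  have hright := prefixSum_right_add_self hrank hpos hi (smallEdges s L R i₀)
  have hlast := prefixSum_left_add_self_eq_sum hrank hpos (smallEdges s L R i₀)
  have hpair : ∑ i ∈ {i₀, i₁}, label s L R i₀ pos (.right i) 0 ≤
      ∑ i, label s L R i₀ pos (.right i) 0 :=
    Finset.sum_le_sum_of_subset (Finset.subset_univ _)
  rw [Finset.sum_pair hi.symm, label_right_self_zero, label_right_zero_of_ne hi (hodd i₁)] at hpair
  rw [label_top_add_label (hodd i₀) h₀, rightSum, label_core_last_of_even hs,
    prefixSum_right_self_of_evenCoreRank hrank, largeEdges_right_self]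
  rw [smallEdges_right_self _ _ _ _ (Nat.zero_lt_of_lt h₀)] at hF
  rw [smallEdges_left] at hlast hcore
  omega

lemma sum_label_right_le_of_evenCoreRank (hcard : Fintype.card β < Fintype.card α)
    (hL : ∀ j, 0 < L j) (hodd : ∀ i, Odd (R i)) (hi : i₁ ≠ i₀) (hDE : D ≠ E) (hFD : F ≠ D)
    (hFE : F ≠ E) :
    ∑ i ∈ {i₀, i₁}ᶜ, label s L R i₀ pos (.right i) 0 ≤
      ∑ j ∈ {D, E, F}ᶜ, label s L R i₀ pos (.left j) 0 := by
  refine sum_le_sum_of_card_le_of_forall_le ?_ fun i hi j hj ↦ ?_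
  · rw [Finset.card_compl, Finset.card_compl, Finset.card_pair hi.symm,
      Finset.card_eq_three.mpr ⟨D, E, F, hDE, hFD.symm, hFE.symm, rfl⟩]
    omega
  · simp only [Finset.mem_compl, Finset.mem_insert, Finset.mem_singleton, not_or] at hi hj
    rw [label_right_zero_of_ne hi.1 (hodd i)]
    exact (prefixSum_add_self_le_prefixSum (hrank _ _ (by simp [evenCoreRank, hi, hj])) _).trans
      ((Nat.le_add_right _ _).trans (prefixSum_add_smallEdges_le_label_left (hL j)))

lemma rightSum_lt_leftSum_of_evenCoreRank (hpos : Function.Injective pos) (hs : Even s)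
    (hs₀ : 0 < s) (hcard : Fintype.card β < Fintype.card α) (hL : ∀ j, 0 < L j)
    (hodd : ∀ i, Odd (R i)) (hi : i₁ ≠ i₀) (hi₁ : R i₁ ≤ R i₀) (hDE : D ≠ E) (hFD : F ≠ D)
    (hFE : F ≠ E) : rightSum s (label s L R i₀ pos) < leftSum (label s L R i₀ pos) := by
  have hpieces := sum_pieceLength_eq_sum_smallEdges_add s L R i₀ (hodd i₀).pos
  have hmatch := sum_label_right_le_of_evenCoreRank (s := s) hrank hcard hL hodd hi hDE hFD hFE
  have hright := Finset.sum_add_sum_compl {i₀, i₁} fun i ↦ label s L R i₀ pos (.right i) 0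
  have hleft := Finset.sum_add_sum_compl {D, E, F} fun j ↦ label s L R i₀ pos (.left j) 0
  have hlarge : ∑ p, largeEdges s L R i₀ p = prefixSum pos (largeEdges s L R i₀) .core +
      largeEdges s L R i₀ .core + largeEdges s L R i₀ (.left D) +
      largeEdges s L R i₀ (.right i₁) + largeEdges s L R i₀ (.left E) := by
    rw [prefixSum_core_add_self hrank hpos hDE, prefixSum_left_add_self hrank hpos hDE hi,
      prefixSum_right_add_self hrank hpos hi, prefixSum_left_add_self_eq_sum hrank hpos]
  have hE := prefixSum_add_largeEdges_lt_label_left (s := s) (R := R) (i₀ := i₀) (pos := pos) (hL E)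
  have hD := prefixSum_add_largeEdges_lt_label_left (s := s) (R := R) (i₀ := i₀) (pos := pos) (hL D)
  have hF := prefixSum_add_smallEdges_le_label_left (s := s) (R := R) (i₀ := i₀) (pos := pos) (hL F)
  have hi₀F := right_self_le_prefixSum_left hrank hFD hFE (smallEdges s L R i₀)
  rw [← prefixSum_right_add_self hrank hpos hi] at hE
  rw [← prefixSum_core_add_self hrank hpos hDE] at hD
  rw [Finset.sum_pair hi.symm, label_right_self_zero, label_right_zero_of_ne hi (hodd i₁)] at hright
  rw [Finset.sum_insert (by simp [hDE, hFD.symm]), Finset.sum_pair hFE.symm] at hleft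
  rw [hlarge, largeEdges_right_of_ne _ _ _ hi] at hpieces
  rw [smallEdges_right_self _ _ _ _ (hodd i₀).pos] at hi₀F
  rw [smallEdges_left] at hF
  have hLF := hL F
  rw [rightSum, leftSum, label_core_last_of_even hs, label_core_zero hs₀]
  omega

lemma isAdmissible_label_of_evenCoreRank (hpos : Function.Injective pos) (hs : Even s)
    (hs₀ : 0 < s) (hcard : Fintype.card β < Fintype.card α) (hL : ∀ j, 0 < L j)
    (hodd : ∀ i, Odd (R i)) (h₀ : 1 < R i₀) (hi : i₁ ≠ i₀) (hi₁ : R i₁ ≤ R i₀) (hDE : D ≠ E)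
    (hFD : F ≠ D) (hFE : F ≠ E) (hEF : L E ≤ L F) :
    IsAdmissible s L R (label s L R i₀ pos) :=
  isAdmissible_label hpos hL hodd h₀
    (inner_lt_rightSum_of_evenCoreRank hrank hpos hs hodd h₀ hi hFD hFE hEF)
    (rightSum_lt_leftSum_of_evenCoreRank hrank hpos hs hs₀ hcard hL hodd hi hi₁ hDE hFD hFE)

end EvenCore

lemma exists_isAdmissible [Fintype α] [Fintype β] {s : ℕ} {L : α → ℕ} {R : β → ℕ} (hs : 0 < s)
    (hcard : Fintype.card β < Fintype.card α) (hβ : 1 < Fintype.card β) (hL : ∀ j, 0 < L j)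
    (hodd : ∀ i, Odd (R i)) (hlong : ∃ i, 1 < R i) : ∃ lab, IsAdmissible s L R lab := by
  have : Nontrivial β := Fintype.one_lt_card_iff_nontrivial.mp hβ
  have : Nonempty α := Fintype.card_pos_iff.mp (Nat.zero_lt_of_lt hcard)
  obtain ⟨i₀, hmax⟩ := Finite.exists_max R
  obtain ⟨i₁, hi⟩ := exists_ne i₀
  obtain ⟨E, hmin⟩ := Finite.exists_min L
  have hrest : 1 < (({E}ᶜ : Finset α)).card := by
    rw [Finset.card_compl, Finset.card_singleton]
    omega
  obtain ⟨D, hDE, F, hFE, hDF⟩ := Finset.one_lt_card.mp hrest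
  rw [Finset.mem_compl, Finset.mem_singleton] at hDE hFE
  have h₀ : 1 < R i₀ := hlong.elim fun i h ↦ h.trans_le (hmax i)
  rcases Nat.even_or_odd s with heven | hodd_s
  · obtain ⟨pos, hpos, hrank⟩ := exists_injective_refining (evenCoreRank i₀ i₁ D E)
    exact ⟨_, isAdmissible_label_of_evenCoreRank hrank hpos heven hs hcard hL hodd h₀ hi
      (hmax i₁) hDE hDF.symm hFE (hmin F)⟩
  · obtain ⟨pos, hpos, hrank⟩ := exists_injective_refining (oddCoreRank (β := β) D E)
    exact ⟨_, isAdmissible_label_of_oddCoreRank hrank hpos hodd_s hcard hL hodd h₀ hDE hDF.symm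
      hFE (hmin F)⟩

section Graph

variable {s : ℕ} {L R : List ℕ}

/-- The edges of a double spider: `⟨p, k⟩` is the `k`-th edge of the piece `p`, counted from
`base s L R p`. -/
abbrev Edge (s : ℕ) (L R : List ℕ) : Type :=
  (p : Piece (Fin L.length) (Fin R.length)) × Fin (pieceLength s L.get R.get p)

/-- The branch vertex a piece starts from; the core starts from `v_l`. -/
def base (s : ℕ) (L R : List ℕ) : Piece (Fin L.length) (Fin R.length) → DSVert s L R
  | .right _ => vR s L R
  | _ => vL s L R

/-- The endpoint of an edge away from the base of its piece. -/
def far : Edge s L R → DSVert s L R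
  | ⟨.core, k⟩ => .inl ⟨k + 1, Nat.succ_lt_succ k.2⟩
  | ⟨.left j, k⟩ => .inr (.inl ⟨j, k⟩)
  | ⟨.right i, k⟩ => .inr (.inr ⟨i, k⟩)

/-- The endpoint of an edge towards the base of its piece. -/
def near (e : Edge s L R) : DSVert s L R :=
  if (e.2 : ℕ) = 0 then base s L R e.1 else far ⟨e.1, ⟨e.2 - 1, by omega⟩⟩

/-- An edge as an unordered pair of vertices. -/
def edge (e : Edge s L R) : Sym2 (DSVert s L R) := s(near e, far e)

lemma far_injective : Function.Injective (far : Edge s L R → DSVert s L R) := by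
  rintro ⟨_ | j | i, k⟩ ⟨_ | j' | i', k'⟩ h <;> simp_all [far] <;> grind

lemma far_ne_vL (e : Edge s L R) : far e ≠ vL s L R := by
  rcases e with ⟨_ | j | i, k⟩ <;> simp [far, vL, Fin.ext_iff]

lemma far_eq_vR_iff (e : Edge s L R) : far e = vR s L R ↔ e.1 = .core ∧ (e.2 : ℕ) + 1 = s := by
  rcases e with ⟨_ | j | i, k⟩ <;> simp [far, vR, Fin.ext_iff]

lemma eq_vL_or_exists_far_eq (u : DSVert s L R) : u = vL s L R ∨ ∃ e, far e = u := by
  rcases u with a | ⟨j, k⟩ | ⟨i, k⟩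
  · cases a using Fin.cases with
    | zero => exact Or.inl rfl
    | succ k => exact Or.inr ⟨⟨.core, k⟩, rfl⟩
  · exact Or.inr ⟨⟨.left j, k⟩, rfl⟩
  · exact Or.inr ⟨⟨.right i, k⟩, rfl⟩

lemma Edge.ext_iff {e e' : Edge s L R} : e = e' ↔ e.1 = e'.1 ∧ (e.2 : ℕ) = e'.2 := by
  refine ⟨fun h ↦ h ▸ ⟨rfl, rfl⟩, fun ⟨hp, hk⟩ ↦ ?_⟩
  obtain ⟨p, k⟩ := e
  obtain ⟨q, l⟩ := e'
  obtain rfl : p = q := hp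
  exact congrArg (Sigma.mk p) (Fin.ext hk)

lemma base_eq_far_iff (p : Piece (Fin L.length) (Fin R.length)) (e : Edge s L R) :
    base s L R p = far e ↔ base s L R p = vR s L R ∧ e.1 = .core ∧ (e.2 : ℕ) + 1 = s := by
  rw [← far_eq_vR_iff]
  refine ⟨fun h ↦ ?_, fun h ↦ h.1.trans h.2.symm⟩
  cases p with
  | right i => exact ⟨rfl, h.symm⟩
  | core => exact absurd h.symm (far_ne_vL e)
  | left j => exact absurd h.symm (far_ne_vL e)

lemma near_eq_far_iff (e e' : Edge s L R) : near e = far e' ↔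
    (e.1 = e'.1 ∧ (e.2 : ℕ) = e'.2 + 1) ∨
      ((e.2 : ℕ) = 0 ∧ base s L R e.1 = vR s L R ∧ e'.1 = .core ∧ (e'.2 : ℕ) + 1 = s) := by
  rw [near]
  split_ifs with h
  · simp only [base_eq_far_iff, h, true_and, (Nat.succ_ne_zero _).symm, and_false, false_or]
  · rw [far_injective.eq_iff, Edge.ext_iff]
    simp only [h, false_and, or_false]
    exact and_congr_right fun _ ↦ by omega

lemma doubleSpider_eq_fromRel :
    DoubleSpider s L R = SimpleGraph.fromRel fun x y ↦ ∃ e, near e = x ∧ far e = y := by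
  rw [DoubleSpider]
  congr! 3 with x y
  constructor
  · intro h
    rcases x with a | ⟨j, k⟩ | ⟨i, k⟩ <;> rcases y with b | ⟨j', k'⟩ | ⟨i', k'⟩ <;>
      simp only at h
    · exact ⟨⟨.core, a, by grind [pieceLength]⟩, by
        by_cases ha : (a : ℕ) = 0 <;>
          simp only [near, ha, ↓reduceIte, base, vL, far, Sum.inl.injEq, Fin.ext_iff,
            Fin.coe_ofNat_eq_mod, Nat.zero_mod]
        omega,
        by simp [far, Fin.ext_iff, h]⟩
    · exact ⟨⟨.left j', k'⟩, by simp [near, base, vL, Fin.ext_iff, h], rfl⟩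
    · exact ⟨⟨.right i', k'⟩, by simp [near, base, vR, Fin.ext_iff, h], rfl⟩
    · obtain ⟨rfl, h⟩ := h
      refine ⟨⟨.left j, k'⟩, ?_, rfl⟩
      simp only [near, far, h, Nat.succ_ne_zero, ↓reduceIte, Nat.add_sub_cancel]
      rfl
    · obtain ⟨rfl, h⟩ := h
      refine ⟨⟨.right i, k'⟩, ?_, rfl⟩
      simp only [near, far, h, Nat.succ_ne_zero, ↓reduceIte, Nat.add_sub_cancel]
      rfl
  · rintro ⟨⟨_ | j | i, k⟩, rfl, rfl⟩ <;> by_cases hk : (k : ℕ) = 0 <;>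
      simp [near, far, base, vL, vR, hk] <;> omega

lemma vL_ne_vR (hs : 0 < s) : vL s L R ≠ vR s L R := by
  simp [vL, vR, Fin.ext_iff, hs.ne]

lemma near_ne_far (hs : 0 < s) (e : Edge s L R) : near e ≠ far e := by
  rw [ne_eq, near_eq_far_iff]
  rintro (⟨-, h⟩ | ⟨-, hbase, hcore, -⟩)
  · omega
  · exact vL_ne_vR hs (hcore ▸ hbase)

lemma range_edge (hs : 0 < s) :
    Set.range (edge : Edge s L R → _) = (DoubleSpider s L R).edgeSet := by
  ext z
  induction z with
  | _ x y =>
    simp only [Set.mem_range, edge, SimpleGraph.mem_edgeSet, doubleSpider_eq_fromRel,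
      SimpleGraph.fromRel_adj, Sym2.eq_iff, exists_or]
    refine ⟨fun h ↦ ⟨?_, h⟩, And.right⟩
    rintro rfl
    obtain ⟨e, h⟩ | ⟨e, h⟩ := h <;> exact near_ne_far hs e (by rw [h.1, h.2])

lemma edge_injective (hs : 0 < s) : Function.Injective (edge : Edge s L R → _) := by
  intro e e' h
  rcases Sym2.eq_iff.mp h with ⟨-, h⟩ | ⟨h, h'⟩
  · exact far_injective h
  · rcases (near_eq_far_iff e e').mp h with ⟨hp, hk⟩ | ⟨-, hbase, hcore', -⟩ <;>
      rcases (near_eq_far_iff e' e).mp h'.symm with ⟨hp', hk'⟩ | ⟨-, hbase', hcore, -⟩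
    · omega
    · exact absurd (hp.symm.trans hcore ▸ hbase') (vL_ne_vR hs)
    · exact absurd (hp'.symm.trans hcore' ▸ hbase) (vL_ne_vR hs)
    · exact absurd (hcore ▸ hbase) (vL_ne_vR hs)

lemma near_eq_vL_iff (e : Edge s L R) :
    near e = vL s L R ↔ (e.2 : ℕ) = 0 ∧ base s L R e.1 = vL s L R := by
  rw [near]
  split_ifs with h
  · simp only [h, true_and]
  · simp only [h, false_and, far_ne_vL]

lemma near_eq_vR_iff (e : Edge s L R) :
    near e = vR s L R ↔ (e.2 : ℕ) = 0 ∧ base s L R e.1 = vR s L R := by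
  rw [near]
  split_ifs with h
  · simp only [h, true_and]
  · have hk : (e.2 : ℕ) < pieceLength s L.get R.get e.1 := e.2.2
    simp only [far_eq_vR_iff, h, false_and, iff_false]
    rintro ⟨hcore, hlast⟩
    have hlen : pieceLength s L.get R.get e.1 = s := congrArg (pieceLength s L.get R.get) hcore
    omega

lemma sum_near_eq_sum_base {M : Type*} [AddCommMonoid M]
    (hpos : ∀ p, 0 < pieceLength s L.get R.get p) {u : DSVert s L R}
    (hu : ∀ e : Edge s L R, near e = u ↔ (e.2 : ℕ) = 0 ∧ base s L R e.1 = u)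
    (w : Piece (Fin L.length) (Fin R.length) → ℕ → M) :
    ∑ e : Edge s L R with near e = u, w e.1 e.2 = ∑ p with base s L R p = u, w p 0 := by
  rw [Finset.sum_filter, Finset.sum_filter, Fintype.sum_sigma]
  refine Finset.sum_congr rfl fun p _ ↦ ?_
  simp only [hu]
  rw [Finset.sum_eq_single ⟨0, hpos p⟩ (fun k _ hk ↦ if_neg fun h ↦ hk (Fin.ext h.1)) (by simp)]
  simp only [true_and]

section VertexSum

variable {f : Sym2 (DSVert s L R) → ℕ} {lab : Piece (Fin L.length) (Fin R.length) → ℕ → ℕ}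

lemma vertexSum_eq_near_add_far (hs : 0 < s) (hf : ∀ e : Edge s L R, f (edge e) = lab e.1 e.2)
    (u : DSVert s L R) : vertexSum (DoubleSpider s L R) f u =
      ∑ e : Edge s L R with near e = u, lab e.1 e.2 +
        ∑ e : Edge s L R with far e = u, lab e.1 e.2 := by
  rw [vertexSum_eq_sum_filter (edge_injective hs) (range_edge hs), ← Finset.sum_union]
  · refine Finset.sum_congr ?_ fun e _ ↦ hf e
    ext e
    simp [edge, eq_comm]
  · rw [Finset.disjoint_filter]
    exact fun e _ hnear hfar ↦ near_ne_far hs e (hnear.trans hfar.symm)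

lemma vertexSum_far (hs : 0 < s) (hf : ∀ e : Edge s L R, f (edge e) = lab e.1 e.2)
    (e : Edge s L R) : vertexSum (DoubleSpider s L R) f (far e) =
      ∑ e' : Edge s L R with near e' = far e, lab e'.1 e'.2 + lab e.1 e.2 := by
  rw [vertexSum_eq_near_add_far hs hf]
  simp only [far_injective.eq_iff, Finset.filter_eq', Finset.mem_univ, if_true,
    Finset.sum_singleton]

lemma vertexSum_inner (hs : 0 < s) (hf : ∀ e : Edge s L R, f (edge e) = lab e.1 e.2)
    (e : Edge s L R) (he : (e.2 : ℕ) + 1 < pieceLength s L.get R.get e.1) :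
    vertexSum (DoubleSpider s L R) f (far e) = lab e.1 e.2 + lab e.1 (e.2 + 1) := by
  have hnear : ∀ e' : Edge s L R, near e' = far e ↔ e' = ⟨e.1, ⟨e.2 + 1, he⟩⟩ := by
    intro e'
    rw [near_eq_far_iff, Edge.ext_iff, or_iff_left]
    rintro ⟨-, -, hcore, hlast⟩
    have hlen : pieceLength s L.get R.get e.1 = s := congrArg (pieceLength s L.get R.get) hcore
    omega
  rw [vertexSum_far hs hf, add_comm]
  simp only [hnear, Finset.filter_eq', Finset.mem_univ, if_true, Finset.sum_singleton]

lemma vertexSum_leaf (hs : 0 < s) (hf : ∀ e : Edge s L R, f (edge e) = lab e.1 e.2)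
    (e : Edge s L R) (hcore : e.1 ≠ .core) (he : (e.2 : ℕ) + 1 = pieceLength s L.get R.get e.1) :
    vertexSum (DoubleSpider s L R) f (far e) = lab e.1 e.2 := by
  have hnear : ∀ e' : Edge s L R, near e' ≠ far e := by
    intro e'
    rw [ne_eq, near_eq_far_iff]
    rintro (⟨hp, hk⟩ | ⟨-, -, hcore', -⟩)
    · have hlen := congrArg (pieceLength s L.get R.get) hp
      omega
    · exact hcore hcore'
  rw [vertexSum_far hs hf]
  simp only [hnear, Finset.filter_false, Finset.sum_empty, zero_add]

lemma vertexSum_vL (hpos : ∀ p, 0 < pieceLength s L.get R.get p)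
    (hf : ∀ e : Edge s L R, f (edge e) = lab e.1 e.2) :
    vertexSum (DoubleSpider s L R) f (vL s L R) = leftSum lab := by
  have hs : 0 < s := hpos .core
  rw [vertexSum_eq_near_add_far hs hf]
  simp only [far_ne_vL, Finset.filter_false, Finset.sum_empty, add_zero]
  rw [sum_near_eq_sum_base hpos near_eq_vL_iff lab, Finset.sum_filter, Piece.sum_eq]
  simp [base, leftSum, (vL_ne_vR hs).symm]

lemma vertexSum_vR (hpos : ∀ p, 0 < pieceLength s L.get R.get p)
    (hf : ∀ e : Edge s L R, f (edge e) = lab e.1 e.2) :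
    vertexSum (DoubleSpider s L R) f (vR s L R) = rightSum s lab := by
  have hs : 0 < s := hpos .core
  have hfar : ∀ e : Edge s L R,
      far e = vR s L R ↔ e = ⟨.core, ⟨s - 1, Nat.sub_one_lt hs.ne'⟩⟩ := by
    intro e
    rw [far_eq_vR_iff, Edge.ext_iff]
    exact and_congr_right fun _ ↦ by dsimp only; omega
  rw [vertexSum_eq_near_add_far hs hf, add_comm]
  simp only [hfar, Finset.filter_eq', Finset.mem_univ, if_true, Finset.sum_singleton]
  rw [sum_near_eq_sum_base hpos near_eq_vR_iff lab, Finset.sum_filter, Piece.sum_eq]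
  simp [base, rightSum, vL_ne_vR hs]

lemma degree_vL (hpos : ∀ p, 0 < pieceLength s L.get R.get p) :
    (DoubleSpider s L R).degree (vL s L R) = L.length + 1 := by
  rw [degree_eq_vertexSum, vertexSum_vL (lab := fun _ _ ↦ 1) hpos fun _ ↦ rfl, leftSum]
  simp [add_comm]

lemma degree_vR (hpos : ∀ p, 0 < pieceLength s L.get R.get p) :
    (DoubleSpider s L R).degree (vR s L R) = R.length + 1 := by
  rw [degree_eq_vertexSum, vertexSum_vR (lab := fun _ _ ↦ 1) hpos fun _ ↦ rfl, rightSum]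
  simp [add_comm]

lemma degree_inner (hs : 0 < s) (e : Edge s L R)
    (he : (e.2 : ℕ) + 1 < pieceLength s L.get R.get e.1) :
    (DoubleSpider s L R).degree (far e) = 2 := by
  rw [degree_eq_vertexSum, vertexSum_inner (lab := fun _ _ ↦ 1) hs (fun _ ↦ rfl) e he]

lemma degree_leaf (hs : 0 < s) (e : Edge s L R) (hcore : e.1 ≠ .core)
    (he : (e.2 : ℕ) + 1 = pieceLength s L.get R.get e.1) :
    (DoubleSpider s L R).degree (far e) = 1 := by
  rw [degree_eq_vertexSum, vertexSum_leaf (lab := fun _ _ ↦ 1) hs (fun _ ↦ rfl) e hcore he]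

lemma vertex_cases (hpos : ∀ p, 0 < pieceLength s L.get R.get p)
    (hf : ∀ e : Edge s L R, f (edge e) = lab e.1 e.2) (u : DSVert s L R) :
    (u = vL s L R ∧ (DoubleSpider s L R).degree u = L.length + 1 ∧
      vertexSum (DoubleSpider s L R) f u = leftSum lab) ∨
    (u = vR s L R ∧ (DoubleSpider s L R).degree u = R.length + 1 ∧
      vertexSum (DoubleSpider s L R) f u = rightSum s lab) ∨
    (∃ e : Edge s L R, u = far e ∧ (e.2 : ℕ) + 1 < pieceLength s L.get R.get e.1 ∧
      (DoubleSpider s L R).degree u = 2 ∧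
      vertexSum (DoubleSpider s L R) f u = lab e.1 e.2 + lab e.1 (e.2 + 1)) ∨
    ∃ e : Edge s L R, u = far e ∧ e.1 ≠ .core ∧ (e.2 : ℕ) + 1 = pieceLength s L.get R.get e.1 ∧
      (DoubleSpider s L R).degree u = 1 ∧ vertexSum (DoubleSpider s L R) f u = lab e.1 e.2 := by
  have hs : 0 < s := hpos .core
  rcases eq_vL_or_exists_far_eq u with rfl | ⟨e, rfl⟩
  · exact .inl ⟨rfl, degree_vL hpos, vertexSum_vL hpos hf⟩
  rcases (Nat.succ_le_of_lt e.2.2).lt_or_eq with hinner | hlast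
  · exact .inr (.inr (.inl ⟨e, rfl, hinner, degree_inner hs e hinner,
      vertexSum_inner hs hf e hinner⟩))
  by_cases hcore : e.1 = .core
  · have hlen := congrArg (pieceLength s L.get R.get) hcore
    have hfar : far e = vR s L R := (far_eq_vR_iff e).mpr ⟨hcore, hlast.trans hlen⟩
    exact .inr (.inl ⟨hfar, hfar ▸ degree_vR hpos, hfar ▸ vertexSum_vR hpos hf⟩)
  · exact .inr (.inr (.inr ⟨e, rfl, hcore, hlast, degree_leaf hs e hcore hlast,
      vertexSum_leaf hs hf e hcore hlast⟩))

lemma vertexSum_lt_of_degree_lt (hpos : ∀ p, 0 < pieceLength s L.get R.get p)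
    (hf : ∀ e : Edge s L R, f (edge e) = lab e.1 e.2) (hlab : IsAdmissible s L.get R.get lab)
    (hR : 1 < R.length) (hRL : R.length < L.length) {u v : DSVert s L R}
    (h : (DoubleSpider s L R).degree u < (DoubleSpider s L R).degree v) :
    vertexSum (DoubleSpider s L R) f u < vertexSum (DoubleSpider s L R) f v := by
  rcases vertex_cases hpos hf u with
      ⟨-, hdu, hsu⟩ | ⟨-, hdu, hsu⟩ | ⟨e, -, he, hdu, hsu⟩ | ⟨e, -, hcore, hlast, hdu, hsu⟩ <;>
    rcases vertex_cases hpos hf v with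
      ⟨-, hdv, hsv⟩ | ⟨-, hdv, hsv⟩ | ⟨e', -, he', hdv, hsv⟩ | ⟨e', -, -, -, hdv, hsv⟩ <;>
    rw [hsu, hsv] <;> try omega
  · exact hlab.right_lt_left
  · exact (hlab.inner_lt_right he).trans hlab.right_lt_left
  · exact hlab.inner_lt_right he
  · rw [Nat.eq_sub_of_add_eq hlast]
    exact (hlab.leaf_lt_right hcore).trans hlab.right_lt_left
  · rw [Nat.eq_sub_of_add_eq hlast]
    exact hlab.leaf_lt_right hcore
  · rw [Nat.eq_sub_of_add_eq hlast]
    exact hlab.leaf_lt_inner hcore he'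

lemma eq_of_degree_eq_of_vertexSum_eq (hpos : ∀ p, 0 < pieceLength s L.get R.get p)
    (hf : ∀ e : Edge s L R, f (edge e) = lab e.1 e.2) (hlab : IsAdmissible s L.get R.get lab)
    (hR : 1 < R.length) (hRL : R.length < L.length) {u v : DSVert s L R}
    (hdeg : (DoubleSpider s L R).degree u = (DoubleSpider s L R).degree v)
    (hsum : vertexSum (DoubleSpider s L R) f u = vertexSum (DoubleSpider s L R) f v) : u = v := by
  rcases vertex_cases hpos hf u with
      ⟨rfl, hdu, -⟩ | ⟨rfl, hdu, -⟩ | ⟨e, rfl, he, hdu, hsu⟩ | ⟨e, rfl, -, -, hdu, hsu⟩ <;>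
    rcases vertex_cases hpos hf v with
      ⟨rfl, hdv, -⟩ | ⟨rfl, hdv, -⟩ | ⟨e', rfl, he', hdv, hsv⟩ | ⟨e', rfl, -, -, hdv, hsv⟩ <;>
    try omega
  · rfl
  · rfl
  · rw [hsu, hsv] at hsum
    exact congrArg far (Edge.ext_iff.mpr (hlab.eq_of_inner_eq he he' hsum))
  · rw [hsu, hsv] at hsum
    exact congrArg far (Edge.ext_iff.mpr (hlab.eq_of_label_eq e.2.2 e'.2.2 hsum))

end VertexSum

theorem isStronglyAntimagic_of_isAdmissible
    {lab : Piece (Fin L.length) (Fin R.length) → ℕ → ℕ}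
    (hpos : ∀ p, 0 < pieceLength s L.get R.get p) (hlab : IsAdmissible s L.get R.get lab)
    (hR : 1 < R.length) (hRL : R.length < L.length) :
    IsStronglyAntimagic (DoubleSpider s L R) := by
  have hs : 0 < s := hpos .core
  have hinj := edge_injective (L := L) (R := R) hs
  have hrange := range_edge (L := L) (R := R) hs
  obtain ⟨f, hf⟩ : ∃ f : Sym2 (DSVert s L R) → ℕ, ∀ e : Edge s L R, f (edge e) = lab e.1 e.2 :=
    ⟨Function.extend edge (fun e ↦ lab e.1 e.2) 0, hinj.extend_apply _ _⟩
  have hcard : (DoubleSpider s L R).edgeFinset.card = ∑ p, pieceLength s L.get R.get p := by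
    simp only [card_edgeFinset_eq hinj hrange, Fintype.card_sigma, Fintype.card_fin]
  refine ⟨f, isStronglyAntimagicLabeling_of_degree ?_ ?_
    (fun u v ↦ vertexSum_lt_of_degree_lt hpos hf hlab hR hRL)
    (fun u v ↦ eq_of_degree_eq_of_vertexSum_eq hpos hf hlab hR hRL)⟩
  · rw [hcard, ← hrange]
    rintro _ ⟨e, rfl⟩
    exact hf e ▸ hlab.label_mem e.2.2
  · rw [← hrange]
    rintro _ ⟨e, rfl⟩ _ ⟨e', rfl⟩ h
    rw [hf, hf] at h
    exact congrArg edge (Edge.ext_iff.mpr (hlab.eq_of_label_eq e.2.2 e'.2.2 h))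

end Graph

end DoubleSpider

/-- Let `DS(L, Pᶜᵒʳᵉ, R)` be a double spider with
`deg(v_l) > deg(v_r) ≥ 3` such that every leg in `R` has odd length and `R` contains at
least one leg of odd length at least 3.  Then `DS(L, Pᶜᵒʳᵉ, R)` is strongly antimagic. -/
theorem doubleSpider_right_odd_isStronglyAntimagic (s : ℕ) (hs : 1 ≤ s) (L R : List ℕ)
    (hL : ∀ ℓ ∈ L, 1 ≤ ℓ) (hR : ∀ ℓ ∈ R, 1 ≤ ℓ)
    (hlr : (DoubleSpider s L R).degree (vR s L R) < (DoubleSpider s L R).degree (vL s L R))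
    (hr : 3 ≤ (DoubleSpider s L R).degree (vR s L R))
    (hodd : ∀ ℓ ∈ R, Odd ℓ) (hlong : ∃ ℓ ∈ R, Odd ℓ ∧ 3 ≤ ℓ) :
    IsStronglyAntimagic (DoubleSpider s L R) := by
  have hpos : ∀ p, 0 < DoubleSpider.pieceLength s L.get R.get p := by
    rintro (_ | j | i)
    · exact hs
    · exact hL _ (L.get_mem j)
    · exact hR _ (R.get_mem i)
  rw [DoubleSpider.degree_vL hpos, DoubleSpider.degree_vR hpos] at hlr
  rw [DoubleSpider.degree_vR hpos] at hr
  obtain ⟨ℓ, hℓ, -, hℓ₃⟩ := hlong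
  obtain ⟨i₀, rfl⟩ := List.get_of_mem hℓ
  obtain ⟨lab, hlab⟩ := DoubleSpider.exists_isAdmissible (L := L.get) (R := R.get) hs
    (by simpa using hlr) (by simp; omega) (fun j ↦ hpos (.left j))
    (fun i ↦ hodd _ (R.get_mem i)) ⟨i₀, by omega⟩
  exact DoubleSpider.isStronglyAntimagic_of_isAdmissible hpos hlab (by omega) (by omega)

end
end

section
/- Let DS(L, P^core, R) be a double spider with deg(v_l) > deg(v_r) ≥ 3 such that R contains at least one path of even length. Then DS(L, P^core, R) is strongly antimagic. -/
open Classical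

noncomputable section

/-!
Along every path the edges are labelled alternately with small labels (light edges) and with
large labels (heavy edges), so that the sum at a vertex of degree `2` consists of a light and a
heavy label. Since both kinds of edges are numbered path by path, and along each path in the same
direction, of two such vertices one has the smaller light label and the smaller heavy label:
the sums at the vertices of degree `2` are distinct. They exceed the labels of the leaves because
pendant edges are light. The vertex `v_r` has the last label of the core, which is heavy, and that
of a leg of even length (the pivot), which is one of the largest of the heavy labels, and any
third edge there covers the remaining deficit. Finally every leg at `v_r` other than the pivot is
matched with a leg at `v_l` whose first label is at least as large; the leg at `v_l` left over
because `deg(v_l) > deg(v_r)` compensates for the pivot and for the core.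

The exception is an even leg at `v_r`, which would begin with a heavy edge, matched with a leg of
length `1`, which is a light edge. On such a twisted leg the first labels are shifted: the
edge at `v_r` is labelled just below its partner, so that the edge following it becomes one of the
largest, or, if the leg has length `2`, the two partners receive consecutive labels among the
smallest ones.
-/

section Rank

open Finset

variable {α κ : Type*} [LinearOrder κ] {s t : Finset α} {key : α → κ} {a b : α}

/-- The position, counted from `1`, of `a` when the elements of `s` are listed by increasing
`key`. -/
def keyRank (s : Finset α) (key : α → κ) (a : α) : ℕ :=
  #{x ∈ s | key x ≤ key a}

lemma card_le_keyRank (ht : ∀ x ∈ t, x ∈ s ∧ key x ≤ key a) : #t ≤ keyRank s key a :=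
  card_le_card fun x hx => mem_filter.2 (ht x hx)

lemma keyRank_pos (ha : a ∈ s) : 0 < keyRank s key a :=
  card_pos.2 ⟨a, mem_filter.2 ⟨ha, le_rfl⟩⟩

lemma keyRank_add_card_le (hab : key a ≤ key b)
    (ht : ∀ x ∈ t, x ∈ s ∧ key a < key x ∧ key x ≤ key b) :
    keyRank s key a + #t ≤ keyRank s key b := by
  have hdisj : Disjoint {x ∈ s | key x ≤ key a} t :=
    disjoint_left.2 fun x hx hxt => (mem_filter.1 hx).2.not_gt (ht x hxt).2.1
  rw [keyRank, ← card_union_of_disjoint hdisj]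
  refine card_le_keyRank fun x hx => ?_
  rcases mem_union.1 hx with hx | hx
  · exact ⟨(mem_filter.1 hx).1, (mem_filter.1 hx).2.trans hab⟩
  · exact ⟨(ht x hx).1, (ht x hx).2.2⟩

lemma keyRank_le_add_card (ht : ∀ x ∈ s, key a < key x → key x ≤ key b → x ∈ t) :
    keyRank s key b ≤ keyRank s key a + #t := by
  refine (card_le_card fun x hx => ?_).trans (card_union_le {x ∈ s | key x ≤ key a} t)
  obtain ⟨hxs, hxb⟩ := mem_filter.1 hx
  rcases le_or_gt (key x) (key a) with hxa | hxa
  · exact mem_union_left _ (mem_filter.2 ⟨hxs, hxa⟩)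
  · exact mem_union_right _ (ht x hxs hxa hxb)

lemma keyRank_mono (hab : key a ≤ key b) : keyRank s key a ≤ keyRank s key b :=
  card_le_keyRank fun _ hx => ⟨(mem_filter.1 hx).1, (mem_filter.1 hx).2.trans hab⟩

lemma keyRank_lt_keyRank (hb : b ∈ s) (hab : key a < key b) :
    keyRank s key a < keyRank s key b :=
  keyRank_add_card_le (t := {b}) hab.le (by simp [hb, hab])

lemma bijOn_keyRank (hkey : Set.InjOn key s) :
    Set.BijOn (keyRank s key) s (Set.Icc 1 #s) := by
  have hmaps : Set.MapsTo (keyRank s key) s (Icc 1 #s : Finset ℕ) := fun a ha =>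
    mem_coe.2 (mem_Icc.2 ⟨keyRank_pos ha, card_filter_le _ _⟩)
  have hinj : Set.InjOn (keyRank s key) s := fun a ha b hb hab => by
    rcases lt_trichotomy (key a) (key b) with h | h | h
    · exact absurd hab (keyRank_lt_keyRank hb h).ne
    · exact hkey ha hb h
    · exact absurd hab (keyRank_lt_keyRank ha h).ne'
  have hsurj := surjOn_of_injOn_of_card_le _ hmaps hinj (by simp)
  rw [← coe_Icc]
  exact ⟨hmaps, hinj, hsurj⟩

end Rank

/-- A finite tree presented by its parent function. The value of `parent` at `root` is
irrelevant, and `depth` only serves to exclude cycles. -/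
structure ParentTree (V : Type*) where
  root : V
  parent : V → V
  depth : V → ℕ
  depth_parent_lt : ∀ v, v ≠ root → depth (parent v) < depth v

namespace ParentTree

open Finset

variable {V : Type*} (T : ParentTree V)

/-- The underlying graph of a tree presented by its parent function. -/
def graph : SimpleGraph V :=
  SimpleGraph.fromRel fun x y => y ≠ T.root ∧ x = T.parent y

/-- The edge joining `v ≠ root` to its parent. -/
def parentEdge (v : V) : Sym2 V := s(T.parent v, v)

lemma graph_adj {x y : V} :
    T.graph.Adj x y ↔ (y ≠ T.root ∧ x = T.parent y) ∨ (x ≠ T.root ∧ y = T.parent x) := by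
  rw [graph, SimpleGraph.fromRel_adj, and_iff_right_iff_imp]
  rintro (⟨h, hx⟩ | ⟨h, hx⟩) rfl <;> exact (T.depth_parent_lt x h).ne (congrArg T.depth hx.symm)

lemma injOn_parentEdge : Set.InjOn T.parentEdge {T.root}ᶜ := by
  intro v hv w hw hvw
  rcases Sym2.eq_iff.1 hvw with ⟨-, h⟩ | ⟨hpv, hpw⟩
  · exact h
  · have hlt := T.depth_parent_lt v hv
    have hgt := T.depth_parent_lt w hw
    rw [hpv] at hlt
    rw [← hpw] at hgt
    exact absurd hlt hgt.not_gt

lemma image_parentEdge : T.parentEdge '' {T.root}ᶜ = T.graph.edgeSet := by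
  ext e
  induction e with
  | _ x y =>
    simp only [parentEdge, Set.mem_image, Set.mem_compl_singleton_iff, Sym2.eq_iff,
      SimpleGraph.mem_edgeSet, graph_adj]
    constructor
    · rintro ⟨v, hv, ⟨rfl, rfl⟩ | ⟨rfl, rfl⟩⟩
      exacts [Or.inl ⟨hv, rfl⟩, Or.inr ⟨hv, rfl⟩]
    · rintro (⟨hy, rfl⟩ | ⟨hx, rfl⟩)
      exacts [⟨y, hy, Or.inl ⟨rfl, rfl⟩⟩, ⟨x, hx, Or.inr ⟨rfl, rfl⟩⟩]

variable [Fintype V]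

/-- The vertices whose parent is `u`. -/
def children (u : V) : Finset V := {v | v ≠ T.root ∧ T.parent v = u}

lemma mem_children {u v : V} : v ∈ T.children u ↔ v ≠ T.root ∧ T.parent v = u := by
  simp [children]

/-- The vertex sum at `u` when the edge from each `v ≠ root` to its parent carries the
label `h v`. -/
def labelSum (h : V → ℕ) (u : V) : ℕ :=
  (if u = T.root then 0 else h u) + ∑ v ∈ T.children u, h v

lemma incidenceFinset_graph (u : V) :
    T.graph.incidenceFinset u =
      (({u} : Finset V).filter (· ≠ T.root) ∪ T.children u).image T.parentEdge := by
  ext e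
  simp only [SimpleGraph.mem_incidenceFinset, SimpleGraph.incidenceSet, Set.mem_ofPred_eq,
    ← image_parentEdge, mem_children, mem_image, mem_union, mem_filter, mem_singleton]
  constructor
  · rintro ⟨⟨v, hv, rfl⟩, hu⟩
    rcases Sym2.mem_iff.1 hu with rfl | rfl
    exacts [⟨v, Or.inr ⟨hv, rfl⟩, rfl⟩, ⟨u, Or.inl ⟨rfl, hv⟩, rfl⟩]
  · rintro ⟨v, ⟨rfl, hv⟩ | ⟨hv, rfl⟩, rfl⟩
    exacts [⟨⟨v, hv, rfl⟩, Sym2.mem_mk_right _ _⟩, ⟨⟨v, hv, rfl⟩, Sym2.mem_mk_left _ _⟩]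

lemma vertexSum_graph (f : Sym2 V → ℕ) (u : V) :
    vertexSum T.graph f u = T.labelSum (f ∘ T.parentEdge) u := by
  have hdisj : Disjoint (({u} : Finset V).filter (· ≠ T.root)) (T.children u) := by
    simp only [disjoint_left, mem_filter, mem_singleton, mem_children]
    rintro v ⟨rfl, -⟩ ⟨hv, hpar⟩
    exact (T.depth_parent_lt v hv).ne (congrArg T.depth hpar)
  have hinj : Set.InjOn T.parentEdge
      (({u} : Finset V).filter (· ≠ T.root) ∪ T.children u : Finset V) :=
    T.injOn_parentEdge.mono fun v hv =>
      (mem_union.1 hv).elim (fun h => (mem_filter.1 h).2) fun h => (T.mem_children.1 h).1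
  rw [vertexSum, incidenceFinset_graph, sum_image hinj, sum_union hdisj, labelSum, sum_filter,
    sum_singleton]
  simp only [ne_eq, ite_not, Function.comp_apply]

lemma degree_graph (u : V) : T.graph.degree u = T.labelSum (fun _ => 1) u := by
  rw [← SimpleGraph.card_incidenceFinset_eq_degree, card_eq_sum_ones]
  exact T.vertexSum_graph (fun _ => 1) u

theorem isStronglyAntimagic_graph {h : V → ℕ} {m : ℕ}
    (hbij : Set.BijOn h {T.root}ᶜ (Set.Icc 1 m)) (hinj : Function.Injective (T.labelSum h))
    (hdeg : ∀ u v, T.labelSum (fun _ => 1) u < T.labelSum (fun _ => 1) v →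
      T.labelSum h u < T.labelSum h v) :
    IsStronglyAntimagic T.graph := by
  have : Nonempty V := ⟨T.root⟩
  obtain ⟨f, hf⟩ : ∃ f : Sym2 V → ℕ, Set.EqOn (f ∘ T.parentEdge) h {T.root}ᶜ :=
    ⟨h ∘ Function.invFunOn T.parentEdge {T.root}ᶜ, fun v hv =>
      congrArg h (T.injOn_parentEdge.leftInvOn_invFunOn hv)⟩
  have hfbij : Set.BijOn f T.graph.edgeSet (Set.Icc 1 m) := by
    rw [← image_parentEdge, ← Set.bijOn_comp_iff T.injOn_parentEdge]
    exact hbij.congr hf.symm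
  have hcard : T.graph.edgeFinset.card = m := by
    rw [← Set.ncard_coe_finset, SimpleGraph.coe_edgeFinset, hfbij.ncard_eq, ← coe_Icc,
      Set.ncard_coe_finset, Nat.card_Icc, Nat.add_sub_cancel]
  have hsum : vertexSum T.graph f = T.labelSum h := by
    ext u
    rw [vertexSum_graph, labelSum, labelSum]
    congr 1
    · split_ifs with hu
      exacts [rfl, hf hu]
    · exact sum_congr rfl fun v hv => hf (T.mem_children.1 hv).1
  refine ⟨f, by rwa [hcard], by rwa [hsum], fun u v huv => ?_⟩
  rw [degree_graph, degree_graph] at huv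
  rw [hsum]
  exact hdeg u v huv

end ParentTree

/-! ### Vertex sums of a double spider -/

/-- The paths making up a double spider: the core path and the legs, numbered separately at
each branch vertex. -/
inductive Thread
  | core
  | left (i : ℕ)
  | right (i : ℕ)

/-- The node `(T, j)` is the vertex at distance `j` from the beginning of `T`, where the core
path begins at `v_l` and a leg at its branch vertex. Only the branch vertex `v_l` has `j = 0`:
it is `(core, 0)`, and `v_r` is the last node of the core. A node other than `v_l` also names
the edge joining it to its predecessor. -/
abbrev Node : Type := Thread × ℕ

/-- The numerical data of a double spider. Only the values of `leftLen` below `leftCount` and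
those of `rightLen` below `rightCount` matter. -/
structure Spider where
  coreLen : ℕ
  leftCount : ℕ
  rightCount : ℕ
  leftLen : ℕ → ℕ
  rightLen : ℕ → ℕ
  coreLen_pos : 1 ≤ coreLen
  leftLen_pos : ∀ i < leftCount, 1 ≤ leftLen i
  rightLen_pos : ∀ i < rightCount, 1 ≤ rightLen i

namespace Spider

open Finset Thread

variable (D : Spider)

/-- The number of edges of a path of the spider. -/
def len : Thread → ℕ
  | core => D.coreLen
  | left i => D.leftLen i
  | right i => D.rightLen i

/-- The core path and the legs of the spider. -/
def threads : Finset Thread :=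
  insert core ((range D.leftCount).image left ∪ (range D.rightCount).image right)

/-- The edges of the spider, which are also its vertices other than `v_l`. -/
def edges : Finset Node :=
  D.threads.biUnion fun T => {T} ×ˢ Icc 1 (D.len T)

/-- The neighbour of a node in the direction of `v_l`. -/
def parent : Node → Node
  | (core, j) => (core, j - 1)
  | (left i, j) => if j ≤ 1 then (core, 0) else (left i, j - 1)
  | (right i, j) => if j ≤ 1 then (core, D.coreLen) else (right i, j - 1)

/-- The vertex sum at the node `u` of the edge labelling `h`. -/
def nodeSum (h : Node → ℕ) (u : Node) : ℕ :=
  (if u = (core, 0) then 0 else h u) + ∑ e ∈ D.edges with D.parent e = u, h e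

@[simp] lemma core_mem_threads : core ∈ D.threads := by simp [threads]

@[simp] lemma left_mem_threads {i : ℕ} : left i ∈ D.threads ↔ i < D.leftCount := by
  simp [threads]

@[simp] lemma right_mem_threads {i : ℕ} : right i ∈ D.threads ↔ i < D.rightCount := by
  simp [threads]

variable {D} {T : Thread} {j : ℕ}

lemma mem_edges : (T, j) ∈ D.edges ↔ T ∈ D.threads ∧ 1 ≤ j ∧ j ≤ D.len T := by
  simp [edges]

lemma core_mem_edges : (core, j) ∈ D.edges ↔ 1 ≤ j ∧ j ≤ D.coreLen := by
  simp [mem_edges, len]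

lemma left_mem_edges {i : ℕ} :
    (left i, j) ∈ D.edges ↔ i < D.leftCount ∧ 1 ≤ j ∧ j ≤ D.leftLen i := by
  simp [mem_edges, len]

lemma right_mem_edges {i : ℕ} :
    (right i, j) ∈ D.edges ↔ i < D.rightCount ∧ 1 ≤ j ∧ j ≤ D.rightLen i := by
  simp [mem_edges, len]

lemma len_pos (hT : T ∈ D.threads) : 1 ≤ D.len T := by
  cases T with
  | core => exact D.coreLen_pos
  | left i => exact D.leftLen_pos i (by simpa using hT)
  | right i => exact D.rightLen_pos i (by simpa using hT)

variable (D) (h : Node → ℕ)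

lemma nodeSum_left :
    D.nodeSum h (core, 0) = h (core, 1) + ∑ i ∈ range D.leftCount, h (left i, 1) := by
  have hchildren : {e ∈ D.edges | D.parent e = (core, 0)} =
      insert (core, 1) ((range D.leftCount).image fun i => (left i, 1)) := by
    have := D.coreLen_pos
    have := D.leftLen_pos
    ext ⟨T, j⟩
    rw [mem_filter, mem_edges, mem_insert, mem_image]
    cases T <;> simp only [parent, len, core_mem_threads, left_mem_threads, mem_range] <;> grind
  rw [nodeSum, hchildren, sum_insert (by simp), sum_image (by simp), if_pos rfl, zero_add]

lemma nodeSum_right :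
    D.nodeSum h (core, D.coreLen) =
      h (core, D.coreLen) + ∑ i ∈ range D.rightCount, h (right i, 1) := by
  have hchildren : {e ∈ D.edges | D.parent e = (core, D.coreLen)} =
      (range D.rightCount).image right ×ˢ {1} := by
    have := D.coreLen_pos
    have := D.rightLen_pos
    ext ⟨T, j⟩
    rw [mem_filter, mem_edges, mem_product, mem_image]
    cases T <;> simp only [parent, len, right_mem_threads, mem_range, right.injEq, exists_eq_right,
      mem_singleton] <;> grind
  have hne : (core, D.coreLen) ≠ (core, 0) := by
    simpa using Nat.one_le_iff_ne_zero.1 D.coreLen_pos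
  simp [nodeSum, hchildren, hne, sum_image]

variable {D}

lemma nodeSum_inner (hT : T ∈ D.threads) (hj : 1 ≤ j) (hjT : j < D.len T) :
    D.nodeSum h (T, j) = h (T, j) + h (T, j + 1) := by
  have hchildren : {e ∈ D.edges | D.parent e = (T, j)} = {(T, j + 1)} := by
    ext ⟨T', j'⟩
    rw [mem_filter, mem_edges, mem_singleton]
    cases T <;> cases T' <;> simp only [parent, len] at hjT ⊢ <;> grind
  rw [nodeSum, hchildren, sum_singleton, if_neg (by grind)]

lemma nodeSum_leaf (hT : T ∈ D.threads) (hcore : T ≠ core) :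
    D.nodeSum h (T, D.len T) = h (T, D.len T) := by
  have hpos := len_pos hT
  have hchildren : {e ∈ D.edges | D.parent e = (T, D.len T)} = ∅ := by
    refine filter_eq_empty_iff.2 fun ⟨T', j'⟩ he => ?_
    rw [mem_edges] at he
    cases T <;> cases T' <;> simp only [parent, len] at hpos he ⊢ <;> grind
  rw [nodeSum, hchildren, sum_empty, if_neg (by grind), add_zero]

variable (D) in
/-- The vertices of degree `2`. -/
def innerNodes : Finset Node := {u ∈ D.edges | u.2 < D.len u.1}

variable (D) in
/-- The vertices of degree `1`. -/
def leaves : Finset Node := {u ∈ D.edges | u.1 ≠ core ∧ u.2 = D.len u.1}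

lemma mem_innerNodes : (T, j) ∈ D.innerNodes ↔ T ∈ D.threads ∧ 1 ≤ j ∧ j < D.len T := by
  rw [innerNodes, mem_filter, mem_edges]
  grind

lemma nodeSum_of_mem_innerNodes {u : Node} (hu : u ∈ D.innerNodes) :
    D.nodeSum h u = h u + h (u.1, u.2 + 1) :=
  have ⟨hT, hj, hjT⟩ := mem_innerNodes.1 hu
  nodeSum_inner h hT hj hjT

lemma nodeSum_of_mem_leaves {u : Node} (hu : u ∈ D.leaves) : D.nodeSum h u = h u := by
  obtain ⟨T, j⟩ := u
  obtain ⟨he, hcore, hj⟩ := mem_filter.1 hu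
  obtain rfl : j = D.len T := hj
  exact nodeSum_leaf h (mem_edges.1 he).1 hcore

lemma node_cases {u : Node} (hu : u = (core, 0) ∨ u ∈ D.edges) :
    u = (core, 0) ∨ u = (core, D.coreLen) ∨ u ∈ D.innerNodes ∨ u ∈ D.leaves := by
  rcases hu with hu | hu
  · exact Or.inl hu
  obtain ⟨T, j⟩ := u
  rcases (mem_edges.1 hu).2.2.lt_or_eq with hj | rfl
  · exact Or.inr (Or.inr (Or.inl (mem_filter.2 ⟨hu, hj⟩)))
  · by_cases hT : T = core
    · exact Or.inr (Or.inl (by rw [hT, len]))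
    · exact Or.inr (Or.inr (Or.inr (mem_filter.2 ⟨hu, hT, rfl⟩)))

variable {h}

theorem nodeSum_lt_and_injective (hr : 2 ≤ D.rightCount) (hlr : D.rightCount < D.leftCount)
    (hleaf : Set.InjOn h D.leaves) (hinner : Set.InjOn (D.nodeSum h) D.innerNodes)
    (hleaf_inner : ∀ u ∈ D.leaves, ∀ v ∈ D.innerNodes, h u < D.nodeSum h v)
    (hinner_ne : D.innerNodes.Nonempty)
    (hinner_right : ∀ v ∈ D.innerNodes, D.nodeSum h v < D.nodeSum h (core, D.coreLen))
    (hright_left : D.nodeSum h (core, D.coreLen) < D.nodeSum h (core, 0))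
    {u v : Node} (hu : u = (core, 0) ∨ u ∈ D.edges) (hv : v = (core, 0) ∨ v ∈ D.edges) :
    (D.nodeSum (fun _ => 1) u < D.nodeSum (fun _ => 1) v → D.nodeSum h u < D.nodeSum h v) ∧
      (D.nodeSum h u = D.nodeSum h v → u = v) := by
  have hleft1 : D.nodeSum (fun _ => 1) (core, 0) = 1 + D.leftCount := by simp [nodeSum_left]
  have hright1 : D.nodeSum (fun _ => 1) (core, D.coreLen) = 1 + D.rightCount := by
    simp [nodeSum_right]
  have hinner1 : ∀ w ∈ D.innerNodes, D.nodeSum (fun _ => 1) w = 2 := fun w hw =>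
    nodeSum_of_mem_innerNodes _ hw
  have hleaf1 : ∀ w ∈ D.leaves, D.nodeSum (fun _ => 1) w = 1 := fun w hw =>
    nodeSum_of_mem_leaves _ hw
  have hleafh : ∀ w ∈ D.leaves, D.nodeSum h w = h w := fun w hw => nodeSum_of_mem_leaves _ hw
  obtain ⟨x, hx⟩ := hinner_ne
  rcases node_cases hu with rfl | rfl | hu | hu <;>
    rcases node_cases hv with rfl | rfl | hv | hv <;>
    grind [Set.InjOn]

end Spider

section DoubleSpider

variable {s : ℕ} {L R : List ℕ}

/-- The parent function and depth of a double spider rooted at `v_l`. -/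
def doubleSpiderTree (s : ℕ) (L R : List ℕ) : ParentTree (DSVert s L R) where
  root := vL s L R
  parent
    | Sum.inl k => Sum.inl ⟨k - 1, by omega⟩
    | Sum.inr (Sum.inl ⟨i, j⟩) =>
      if (j : ℕ) = 0 then vL s L R else Sum.inr (Sum.inl ⟨i, ⟨j - 1, by omega⟩⟩)
    | Sum.inr (Sum.inr ⟨i, j⟩) =>
      if (j : ℕ) = 0 then vR s L R else Sum.inr (Sum.inr ⟨i, ⟨j - 1, by omega⟩⟩)
  depth
    | Sum.inl k => k
    | Sum.inr (Sum.inl ⟨_, j⟩) => j + 1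
    | Sum.inr (Sum.inr ⟨_, j⟩) => s + 1 + j
  depth_parent_lt := by
    rintro (k | ⟨i, j⟩ | ⟨i, j⟩) hv
    · have : (k : ℕ) ≠ 0 := fun hk => hv (congrArg Sum.inl (Fin.ext hk))
      dsimp only
      omega
    · dsimp only
      split_ifs with hj
      · simp [vL]
      · dsimp only
        omega
    · dsimp only
      split_ifs with hj
      · simp only [vR, Fin.val_last]
        omega
      · dsimp only
        omega

lemma doubleSpider_eq_graph : DoubleSpider s L R = (doubleSpiderTree s L R).graph := by
  unfold DoubleSpider ParentTree.graph
  congr 1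
  ext x y
  rcases x with x | ⟨i, x⟩ | ⟨i, x⟩ <;> rcases y with y | ⟨i', y⟩ | ⟨i', y⟩ <;>
    simp only [doubleSpiderTree, vL, vR]
  any_goals grind
  all_goals obtain rfl | hi := eq_or_ne i i' <;> grind

end DoubleSpider

/-- A numbering of the legs of `DoubleSpider D.coreLen L R` by the legs of `D`. -/
structure Spider.Indexing (D : Spider) (L R : List ℕ) where
  left : Fin L.length ≃ Fin D.leftCount
  right : Fin R.length ≃ Fin D.rightCount
  leftLen_left : ∀ i, D.leftLen (left i) = L.get i
  rightLen_right : ∀ i, D.rightLen (right i) = R.get i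

namespace Spider.Indexing

open Finset Thread

variable {D : Spider} {L R : List ℕ}

section Node

variable (I : D.Indexing L R)

/-- The node corresponding to a vertex of the double spider. -/
def node : DSVert D.coreLen L R → Node
  | Sum.inl k => (core, k)
  | Sum.inr (Sum.inl ⟨i, j⟩) => (Thread.left (I.left i), j + 1)
  | Sum.inr (Sum.inr ⟨i, j⟩) => (Thread.right (I.right i), j + 1)

lemma node_injective : Function.Injective I.node := by
  rintro (k | ⟨i, j⟩ | ⟨i, j⟩) (k' | ⟨i', j'⟩ | ⟨i', j'⟩) h <;>
    simp only [node, Prod.mk.injEq, reduceCtorEq, false_and, true_and, Thread.left.injEq,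
      Thread.right.injEq, Fin.val_inj, EmbeddingLike.apply_eq_iff_eq] at h
  · rw [h]
  · obtain ⟨rfl, hj⟩ := h
    rw [Fin.ext (Nat.succ_injective hj)]
  · obtain ⟨rfl, hj⟩ := h
    rw [Fin.ext (Nat.succ_injective hj)]

lemma node_parent (v : DSVert D.coreLen L R) :
    I.node ((doubleSpiderTree D.coreLen L R).parent v) = D.parent (I.node v) := by
  rcases v with k | ⟨i, j⟩ | ⟨i, j⟩
  · rfl
  · simp only [doubleSpiderTree, node, parent]
    grind [vL, node]
  · simp only [doubleSpiderTree, node, parent]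
    grind [vR, node]

lemma bijOn_node : Set.BijOn I.node {(doubleSpiderTree D.coreLen L R).root}ᶜ D.edges := by
  refine ⟨?_, I.node_injective.injOn, ?_⟩
  · rintro (k | ⟨i, j⟩ | ⟨i, j⟩) hv <;> refine mem_coe.2 (mem_edges.2 ?_)
    · have : (k : ℕ) ≠ 0 := fun hk => hv (congrArg Sum.inl (Fin.ext hk))
      exact ⟨D.core_mem_threads, by omega, Nat.lt_succ_iff.1 k.2⟩
    · exact ⟨by simp, by simp, by rw [len, I.leftLen_left]; exact j.2⟩
    · exact ⟨by simp, by simp, by rw [len, I.rightLen_right]; exact j.2⟩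
  · rintro ⟨_ | i | i, j⟩ he <;> obtain ⟨hi, hj, hjT⟩ := mem_edges.1 he
    · exact ⟨Sum.inl ⟨j, Nat.lt_succ_of_le hjT⟩, by simp [doubleSpiderTree, vL, Fin.ext_iff]; omega,
        rfl⟩
    · obtain ⟨i, rfl⟩ : ∃ k, i = I.left k :=
        ⟨I.left.symm ⟨i, D.left_mem_threads.1 hi⟩, by simp⟩
      have hlt : j - 1 < L.get i := by rw [← I.leftLen_left]; rw [len] at hjT; omega
      exact ⟨Sum.inr (Sum.inl ⟨i, j - 1, hlt⟩), by simp [doubleSpiderTree, vL],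
        by simp [node, Nat.sub_add_cancel hj]⟩
    · obtain ⟨i, rfl⟩ : ∃ k, i = I.right k :=
        ⟨I.right.symm ⟨i, D.right_mem_threads.1 hi⟩, by simp⟩
      have hlt : j - 1 < R.get i := by rw [← I.rightLen_right]; rw [len] at hjT; omega
      exact ⟨Sum.inr (Sum.inr ⟨i, j - 1, hlt⟩), by simp [doubleSpiderTree, vL],
        by simp [node, Nat.sub_add_cancel hj]⟩

lemma node_eq_or_mem_edges (v : DSVert D.coreLen L R) :
    I.node v = (core, 0) ∨ I.node v ∈ D.edges := by
  by_cases hv : v = vL D.coreLen L R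
  · exact Or.inl (by simp [hv, vL, node])
  · exact Or.inr (I.bijOn_node.mapsTo hv)

lemma labelSum_comp_node (h : Node → ℕ) (v : DSVert D.coreLen L R) :
    (doubleSpiderTree D.coreLen L R).labelSum (h ∘ I.node) v = D.nodeSum h (I.node v) := by
  have hroot : I.node v = (core, 0) ↔ v = (doubleSpiderTree D.coreLen L R).root :=
    I.node_injective.eq_iff (b := vL D.coreLen L R)
  rw [ParentTree.labelSum, nodeSum]
  congr 1
  · simp only [hroot, Function.comp_apply]
  refine sum_nbij I.node (fun w hw => ?_) I.node_injective.injOn (fun e he => ?_) fun _ _ => rfl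
  · obtain ⟨hw, hpar⟩ := (ParentTree.mem_children _).1 hw
    exact mem_filter.2 ⟨I.bijOn_node.mapsTo hw, by rw [← I.node_parent, hpar]⟩
  · obtain ⟨he, hpar⟩ := mem_filter.1 he
    obtain ⟨w, hw, rfl⟩ := I.bijOn_node.surjOn he
    rw [← I.node_parent] at hpar
    exact ⟨w, (ParentTree.mem_children _).2 ⟨hw, I.node_injective hpar⟩, rfl⟩

lemma degree_eq_nodeSum (v : DSVert D.coreLen L R) :
    (DoubleSpider D.coreLen L R).degree v = D.nodeSum (fun _ => 1) (I.node v) := by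
  have hdegree := (doubleSpiderTree D.coreLen L R).degree_graph v
  rw [← I.labelSum_comp_node, Function.comp_def, ← hdegree]
  congr!
  exact doubleSpider_eq_graph

end Node

lemma degree_vL (I : D.Indexing L R) :
    (DoubleSpider D.coreLen L R).degree (vL D.coreLen L R) = 1 + D.leftCount := by
  rw [I.degree_eq_nodeSum, show I.node (vL D.coreLen L R) = (core, 0) from rfl]
  simp [nodeSum_left]

lemma degree_vR (I : D.Indexing L R) :
    (DoubleSpider D.coreLen L R).degree (vR D.coreLen L R) = 1 + D.rightCount := by
  rw [I.degree_eq_nodeSum, show I.node (vR D.coreLen L R) = (core, D.coreLen) from rfl]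
  simp [nodeSum_right]

theorem isStronglyAntimagic (I : D.Indexing L R) {h : Node → ℕ} {m : ℕ}
    (hbij : Set.BijOn h D.edges (Set.Icc 1 m))
    (hsum : ∀ u v, (u = (core, 0) ∨ u ∈ D.edges) → (v = (core, 0) ∨ v ∈ D.edges) →
      (D.nodeSum (fun _ => 1) u < D.nodeSum (fun _ => 1) v → D.nodeSum h u < D.nodeSum h v) ∧
        (D.nodeSum h u = D.nodeSum h v → u = v)) :
    IsStronglyAntimagic (DoubleSpider D.coreLen L R) := by
  rw [doubleSpider_eq_graph]
  refine ParentTree.isStronglyAntimagic_graph _ (hbij.comp I.bijOn_node)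
    (fun u v huv => I.node_injective ?_) fun u v huv => ?_
  · rw [labelSum_comp_node, labelSum_comp_node] at huv
    exact (hsum _ _ (I.node_eq_or_mem_edges u) (I.node_eq_or_mem_edges v)).2 huv
  · rw [labelSum_comp_node, labelSum_comp_node]
    refine (hsum _ _ (I.node_eq_or_mem_edges u) (I.node_eq_or_mem_edges v)).1 ?_
    rwa [← labelSum_comp_node, ← labelSum_comp_node]

end Spider.Indexing

/-- The position of a leg of length `n` among the legs at `v_l`: first the odd legs of length at
least `3`, then the even legs, then the legs of length `1`. -/
def leftRank (n : ℕ) : ℕ :=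
  if n = 1 then 2 else if n % 2 = 0 then 1 else 0

/-- Both families of legs are listed in a convenient order: those at `v_l` by `leftRank`, those
at `v_r` with the even legs first. -/
structure Spider.IsSorted (D : Spider) : Prop where
  left : ∀ i j, i ≤ j → j < D.leftCount → leftRank (D.leftLen i) ≤ leftRank (D.leftLen j)
  right : ∀ i j, i ≤ j → j < D.rightCount → D.rightLen i % 2 ≤ D.rightLen j % 2

lemma exists_sorted_numbering (L : List ℕ) (rank : ℕ → ℕ) :
    ∃ (σ : Fin L.length ≃ Fin L.length) (len : ℕ → ℕ), (∀ i, len (σ i) = L.get i) ∧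
      ∀ i j, i ≤ j → j < L.length → rank (len i) ≤ rank (len j) := by
  refine ⟨(Tuple.sort (rank ∘ L.get)).symm, fun i =>
    if hi : i < L.length then L.get (Tuple.sort (rank ∘ L.get) ⟨i, hi⟩) else 0,
    fun i => by simp, fun i j hij hj => ?_⟩
  simpa [hj, hij.trans_lt hj] using Tuple.monotone_sort (rank ∘ L.get)
    (show (⟨i, hij.trans_lt hj⟩ : Fin L.length) ≤ ⟨j, hj⟩ from hij)

lemma exists_isSorted_indexing {s : ℕ} (hs : 1 ≤ s) {L R : List ℕ} (hL : ∀ ℓ ∈ L, 1 ≤ ℓ)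
    (hR : ∀ ℓ ∈ R, 1 ≤ ℓ) :
    ∃ D : Spider, D.coreLen = s ∧ D.IsSorted ∧ Nonempty (D.Indexing L R) := by
  obtain ⟨σ, A, hA, hAsorted⟩ := exists_sorted_numbering L leftRank
  obtain ⟨τ, B, hB, hBsorted⟩ := exists_sorted_numbering R (· % 2)
  have hApos : ∀ i < L.length, 1 ≤ A i := fun i hi => by
    have h := hA (σ.symm ⟨i, hi⟩)
    rw [Equiv.apply_symm_apply] at h
    exact h ▸ hL _ (List.get_mem _ _)
  have hBpos : ∀ i < R.length, 1 ≤ B i := fun i hi => by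
    have h := hB (τ.symm ⟨i, hi⟩)
    rw [Equiv.apply_symm_apply] at h
    exact h ▸ hR _ (List.get_mem _ _)
  exact ⟨⟨s, L.length, R.length, A, B, hs, hApos, hBpos⟩, rfl, ⟨hAsorted, hBsorted⟩,
    ⟨σ, τ, hA, hB⟩⟩

/-- A double spider with a distinguished even leg at `v_r`, the *pivot*. The `i`-th leg at `v_r`
is matched with the `i`-th leg at `v_l`, so that the leg of number `rightCount` at `v_l` is the
first one left unmatched. In the first case of `pivot_matching` the pivot is the last even leg
matched with a leg of length `1`, in the second case there is no even leg of this kind. -/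
structure PivotedSpider extends Spider where
  pivot : ℕ
  pivot_lt : pivot < rightCount
  even_pivot : rightLen pivot % 2 = 0
  two_le_rightCount : 2 ≤ rightCount
  rightCount_lt : rightCount < leftCount
  pivot_matching :
    (leftLen pivot = 1 ∧ leftLen rightCount = 1 ∧ ∀ i < leftCount, leftLen i ≠ 1 →
      i < rightCount ∧ i ≠ pivot ∧ rightLen i % 2 = 0) ∨
    ((∀ i < rightCount, rightLen i % 2 = 0 → leftLen i ≠ 1) ∧
      (leftLen pivot % 2 = 0 → ∀ i < leftCount, leftLen i ≠ 1 → leftLen i % 2 = 0))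

lemma Spider.IsSorted.exists_pivot {D : Spider} (hD : D.IsSorted) (hr : 2 ≤ D.rightCount)
    (hlr : D.rightCount < D.leftCount) (heven : ∃ i < D.rightCount, D.rightLen i % 2 = 0) :
    ∃ P : PivotedSpider, P.toSpider = D := by
  have hleft := hD.left
  have hright := hD.right
  simp only [leftRank] at hleft
  by_cases hunit : ∃ r < D.rightCount, D.rightLen r % 2 = 0 ∧ D.leftLen r = 1
  · obtain ⟨r, hr_lt, hr_even, hr_unit⟩ := hunit
    refine ⟨⟨D, r, hr_lt, hr_even, hr, hlr, Or.inl ⟨hr_unit, ?_, fun i hi hne => ?_⟩⟩, rfl⟩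
    · grind
    · have hir : i < r := by grind
      have := hright i r hir.le hr_lt
      exact ⟨by omega, by omega, by omega⟩
  · obtain ⟨r, hr_lt, hr_even⟩ := heven
    have h0_even : D.rightLen 0 % 2 = 0 := by
      have := hright 0 r (Nat.zero_le r) hr_lt
      omega
    refine ⟨⟨D, 0, by omega, h0_even, hr, hlr, Or.inr ⟨by grind, fun h0 i hi hne => ?_⟩⟩, rfl⟩
    have := hleft 0 i (Nat.zero_le i) hi
    grind

/-! ### The labelling -/

namespace PivotedSpider

open Finset Thread

variable (D : PivotedSpider)

/-- The even legs at `v_r`, other than the pivot, that are matched with a leg of length `1`.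
On such a leg the pattern of light and heavy edges is shifted near `v_r`. -/
def Twisted (i : ℕ) : Prop :=
  i < D.rightCount ∧ i ≠ D.pivot ∧ D.rightLen i % 2 = 0 ∧ D.leftLen i = 1

/-- The twisted legs of length `2`. -/
def ShortTwisted (i : ℕ) : Prop := D.Twisted i ∧ D.rightLen i = 2

/-- The twisted legs of length at least `4`. -/
def LongTwisted (i : ℕ) : Prop := D.Twisted i ∧ D.rightLen i ≠ 2

/-- The edges are labelled block after block. Along a path the edges are alternately light
(block `2`) and heavy (block `8`), a pendant edge being light; the edges of legs of length `1`
and those close to a branch vertex are exceptional. -/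
def block : Node → ℕ
  | (core, j) =>
    if j = 1 ∧ D.coreLen % 2 = 0 then 9 else if (D.coreLen - j) % 2 = 0 then 8 else 2
  | (left i, j) =>
    if D.ShortTwisted i then 1
    else if D.leftLen i = 1 then if i = D.pivot ∨ i = D.rightCount then 6 else 5
    else if j = 1 ∧ D.leftLen i % 2 = 1 then 9
    else if (D.leftLen i - j) % 2 = 0 then 2 else 8
  | (right i, j) =>
    if D.ShortTwisted i then if j = 1 then 1 else 7
    else if D.Twisted i ∧ j = 1 then 4
    else if D.Twisted i ∧ j = 2 then 9
    else if D.rightLen i = 1 then 3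
    else if (D.rightLen i - j) % 2 = 0 then 2 else 8

/-- Within a block, the edges are listed path by path, the paths being ordered by their kind.
Only block `1` follows the decreasing order of the indices. -/
def group : Node → ℕ
  | (core, _) => if D.coreLen = 1 then 7 else 2
  | (left i, _) =>
    if D.ShortTwisted i then D.rightCount - i else if D.leftLen i % 2 = 1 then 1 else 5
  | (right i, j) =>
    if D.ShortTwisted i ∧ j = 1 then D.rightCount - i
    else if D.Twisted i then 0
    else if i = D.pivot then 6
    else if D.rightLen i % 2 = 1 then 4 else 3

/-- The number of a leg. -/
def index : Node → ℕ
  | (core, _) => 0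
  | (left i, _) => i
  | (right i, _) => i

/-- The order in which the edges of one path are taken: legs from their end, and the core from
the end at which its heavy edge is not exceptional. -/
def offset : Node → ℕ
  | (core, j) => if D.coreLen % 2 = 0 then j else D.coreLen - j
  | (left i, j) => D.leftLen i - j
  | (right i, j) => D.rightLen i - j

/-- The sort key of an edge, compared lexicographically. -/
def key (e : Node) : ℕ ×ₗ ℕ ×ₗ ℕ ×ₗ ℕ :=
  toLex (D.block e, toLex (D.group e, toLex (index e, D.offset e)))

/-- The labelling: each edge is labelled by its position in the order of the keys. -/
def label (e : Node) : ℕ := keyRank D.edges D.key e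

variable {D} {T : Thread} {e e' u v : Node} {i j k : ℕ}

lemma key_lt_key :
    D.key e < D.key e' ↔ D.block e < D.block e' ∨ D.block e = D.block e' ∧
      (D.group e < D.group e' ∨ D.group e = D.group e' ∧
        (index e < index e' ∨ index e = index e' ∧ D.offset e < D.offset e')) := by
  simp only [key, Prod.Lex.toLex_lt_toLex]

lemma key_le_key :
    D.key e ≤ D.key e' ↔ D.block e < D.block e' ∨ D.block e = D.block e' ∧
      (D.group e < D.group e' ∨ D.group e = D.group e' ∧
        (index e < index e' ∨ index e = index e' ∧ D.offset e ≤ D.offset e')) := by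
  simp only [key, Prod.Lex.toLex_le_toLex]

lemma injOn_key : Set.InjOn D.key D.edges := by
  rintro ⟨T, j⟩ hu ⟨T', j'⟩ hv huv
  obtain ⟨hblock, hgroup, hindex, hoffset⟩ : D.block (T, j) = D.block (T', j') ∧
      D.group (T, j) = D.group (T', j') ∧ index (T, j) = index (T', j') ∧
        D.offset (T, j) = D.offset (T', j') := by
    simpa only [key, toLex_inj, Prod.mk.injEq] using huv
  have := D.pivot_lt
  rw [mem_coe] at hu hv
  cases T <;> cases T' <;>
    simp only [block, group, index, offset, Spider.core_mem_edges, Spider.left_mem_edges,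
      Spider.right_mem_edges] at hu hv hblock hgroup hindex hoffset <;>
    (try subst hindex) <;> grind [ShortTwisted, Twisted]

/-! ### Vertices of degree 2 -/

variable (D) in
/-- Of the two edges at a vertex `u` of degree `2`, the one in the lower block. -/
def lowEdge (u : Node) : Node :=
  if D.block u < D.block (u.1, u.2 + 1) then u else (u.1, u.2 + 1)

variable (D) in
/-- Of the two edges at a vertex `u` of degree `2`, the one in the higher block. -/
def highEdge (u : Node) : Node :=
  if D.block u < D.block (u.1, u.2 + 1) then (u.1, u.2 + 1) else u

lemma exists_lowEdge_eq (u : Node) : ∃ j, D.lowEdge u = (u.1, j) ∧ u.2 ≤ j ∧ j ≤ u.2 + 1 := by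
  grind [lowEdge]

lemma exists_highEdge_eq (u : Node) : ∃ j, D.highEdge u = (u.1, j) ∧ u.2 ≤ j ∧ j ≤ u.2 + 1 := by
  grind [highEdge]

lemma lowEdge_mem_edges (hu : u ∈ D.innerNodes) : D.lowEdge u ∈ D.edges := by
  obtain ⟨T, j⟩ := u
  obtain ⟨hT, hj⟩ := Spider.mem_innerNodes.1 hu
  grind [lowEdge, Spider.mem_edges]

lemma highEdge_mem_edges (hu : u ∈ D.innerNodes) : D.highEdge u ∈ D.edges := by
  obtain ⟨T, j⟩ := u
  obtain ⟨hT, hj⟩ := Spider.mem_innerNodes.1 hu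
  grind [highEdge, Spider.mem_edges]

lemma nodeSum_eq_lowEdge_add_highEdge (hu : u ∈ D.innerNodes) :
    D.nodeSum D.label u = D.label (D.lowEdge u) + D.label (D.highEdge u) := by
  rw [Spider.nodeSum_of_mem_innerNodes _ hu, lowEdge, highEdge]
  split_ifs
  · rfl
  · exact add_comm _ _

variable (D) in
/-- A vertex of degree `2` is regular if it is not the first vertex of a twisted leg. -/
def Regular (u : Node) : Prop := ¬∃ i, D.Twisted i ∧ u = (right i, 1)

lemma Regular.block_edges (hu : u ∈ D.innerNodes) (hreg : D.Regular u) :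
    D.block (D.lowEdge u) = 2 ∧ D.block (D.highEdge u) = 8 ∨
      D.block (D.lowEdge u) = 8 ∧ D.block (D.highEdge u) = 9 := by
  obtain ⟨T, j⟩ := u
  obtain ⟨hT, hj, hjT⟩ := Spider.mem_innerNodes.1 hu
  simp only [lowEdge, highEdge]
  cases T <;> simp only [Regular, block, Spider.len, right.injEq, Prod.mk.injEq] at * <;>
    grind [ShortTwisted, Twisted]

lemma Regular.of_le (hreg : D.Regular (T, i)) (hi : 1 ≤ i) (hij : i ≤ j) :
    D.Regular (T, j) := by
  grind [Regular]

lemma Regular.group_eq (hi : D.Regular (T, i)) (hj : D.Regular (T, j)) :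
    D.group (T, i) = D.group (T, j) := by
  cases T <;> simp only [Regular, group, right.injEq, Prod.mk.injEq] at *
  grind [ShortTwisted]

lemma index_eq (T : Thread) (i j : ℕ) : index (T, i) = index (T, j) := by
  cases T <;> rfl

lemma Regular.thread_eq (hu : u ∈ D.innerNodes) (hregu : D.Regular u) (hv : v ∈ D.innerNodes)
    (hregv : D.Regular v) (hgroup : D.group u = D.group v) (hindex : index u = index v) :
    u.1 = v.1 := by
  obtain ⟨T, j⟩ := u
  obtain ⟨T', j'⟩ := v
  obtain ⟨hT, hj, hjT⟩ := Spider.mem_innerNodes.1 hu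
  obtain ⟨hT', hj', hjT'⟩ := Spider.mem_innerNodes.1 hv
  cases T <;> cases T' <;>
    simp only [Regular, Spider.len, group, index, right.injEq, Prod.mk.injEq] at * <;>
    (try subst hindex) <;> grind [ShortTwisted, Twisted]

lemma key_monotone_or_antitone (T : Thread) :
    (∀ i j, i ≤ j → D.Regular (T, i) → D.Regular (T, j) → D.block (T, i) = D.block (T, j) →
      D.key (T, i) ≤ D.key (T, j)) ∨
    (∀ i j, i ≤ j → D.Regular (T, i) → D.Regular (T, j) → D.block (T, i) = D.block (T, j) →
      D.key (T, j) ≤ D.key (T, i)) := by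
  simp only [key_le_key]
  by_cases hcore : T = core ∧ D.coreLen % 2 = 0
  · refine Or.inl fun i j hij hi hj hblock => ?_
    grind [hi.group_eq hj, index_eq T i j, offset]
  · refine Or.inr fun i j hij hi hj hblock => ?_
    cases T <;> grind [hi.group_eq hj, index_eq, offset]

/-- The two edges at `u` come no later than those at `v` in the order of the labels. -/
def EdgesLE (D : PivotedSpider) (u v : Node) : Prop :=
  D.key (D.lowEdge u) ≤ D.key (D.lowEdge v) ∧ D.key (D.highEdge u) ≤ D.key (D.highEdge v)

lemma Regular.edgesLE_or_of_lt (hi1 : 1 ≤ i) (hij : i < j) (hi : D.Regular (T, i))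
    (hlow : D.block (D.lowEdge (T, i)) = D.block (D.lowEdge (T, j)))
    (hhigh : D.block (D.highEdge (T, i)) = D.block (D.highEdge (T, j))) :
    D.EdgesLE (T, i) (T, j) ∨ D.EdgesLE (T, j) (T, i) := by
  obtain ⟨a, ha, hia, hai⟩ := D.exists_lowEdge_eq (T, i)
  obtain ⟨b, hb, hjb, -⟩ := D.exists_lowEdge_eq (T, j)
  obtain ⟨c, hc, hic, hci⟩ := D.exists_highEdge_eq (T, i)
  obtain ⟨d, hd, hjd, -⟩ := D.exists_highEdge_eq (T, j)
  dsimp only at *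
  rw [EdgesLE, EdgesLE, ha, hb, hc, hd]
  rw [ha, hb] at hlow
  rw [hc, hd] at hhigh
  have hab : a ≤ b := by omega
  have hcd : c ≤ d := by omega
  have hreg {k : ℕ} (hk : i ≤ k) : D.Regular (T, k) := hi.of_le hi1 hk
  rcases key_monotone_or_antitone (D := D) T with h | h
  · exact Or.inl ⟨h a b hab (hreg hia) (hreg (by omega)) hlow,
      h c d hcd (hreg hic) (hreg (by omega)) hhigh⟩
  · exact Or.inr ⟨h a b hab (hreg hia) (hreg (by omega)) hlow,
      h c d hcd (hreg hic) (hreg (by omega)) hhigh⟩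

lemma Regular.group_index_edges (hu : u ∈ D.innerNodes) (hreg : D.Regular u) :
    (D.group (D.lowEdge u) = D.group u ∧ index (D.lowEdge u) = index u) ∧
      D.group (D.highEdge u) = D.group u ∧ index (D.highEdge u) = index u := by
  obtain ⟨T, i⟩ := u
  have hi := (Spider.mem_innerNodes.1 hu).2.1
  obtain ⟨a, ha, hia, -⟩ := D.exists_lowEdge_eq (T, i)
  obtain ⟨c, hc, hic, -⟩ := D.exists_highEdge_eq (T, i)
  rw [ha, hc]
  exact ⟨⟨(hreg.of_le hi hia).group_eq hreg, index_eq ..⟩,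
    (hreg.of_le hi hic).group_eq hreg, index_eq ..⟩

lemma Regular.edgesLE_or (hu : u ∈ D.innerNodes) (hregu : D.Regular u)
    (hv : v ∈ D.innerNodes) (hregv : D.Regular v) : D.EdgesLE u v ∨ D.EdgesLE v u := by
  have hublock := hregu.block_edges hu
  have hvblock := hregv.block_edges hv
  by_cases hlow : D.block (D.lowEdge u) = D.block (D.lowEdge v)
  swap
  · simp only [EdgesLE, key_le_key]
    omega
  have hhigh : D.block (D.highEdge u) = D.block (D.highEdge v) := by omega
  by_cases hfst : u.1 = v.1
  · obtain ⟨T, i⟩ := u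
    obtain ⟨T', j⟩ := v
    obtain rfl : T = T' := hfst
    have hi := (Spider.mem_innerNodes.1 hu).2.1
    have hj := (Spider.mem_innerNodes.1 hv).2.1
    rcases lt_trichotomy i j with hij | rfl | hij
    · exact hregu.edgesLE_or_of_lt hi hij hlow hhigh
    · exact Or.inl ⟨le_rfl, le_rfl⟩
    · exact (hregv.edgesLE_or_of_lt hj hij hlow.symm hhigh.symm).symm
  · have hne := mt (hregu.thread_eq hu hv hregv)
    have huedges := hregu.group_index_edges hu
    have hvedges := hregv.group_index_edges hv
    simp only [EdgesLE, key_le_key]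
    grind

lemma ShortTwisted.mem_innerNodes (hi : D.ShortTwisted i) : (right i, 1) ∈ D.innerNodes := by
  simp [Spider.mem_innerNodes, Spider.len, hi.1.1, hi.2]

lemma LongTwisted.mem_innerNodes (hi : D.LongTwisted i) (hj : j = 1 ∨ j = 2) :
    (right i, j) ∈ D.innerNodes := by
  have := D.rightLen_pos i hi.1.1
  simp only [Spider.mem_innerNodes, Spider.len, Spider.right_mem_threads]
  grind [LongTwisted, Twisted]

lemma ShortTwisted.nodeSum_eq (hi : D.ShortTwisted i) (h : Node → ℕ) :
    D.nodeSum h (right i, 1) = h (right i, 1) + h (right i, 2) :=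
  Spider.nodeSum_of_mem_innerNodes _ hi.mem_innerNodes

lemma LongTwisted.nodeSum_eq (hi : D.LongTwisted i) (h : Node → ℕ) :
    D.nodeSum h (right i, 1) = h (right i, 1) + h (right i, 2) ∧
      D.nodeSum h (right i, 2) = h (right i, 2) + h (right i, 3) :=
  ⟨Spider.nodeSum_of_mem_innerNodes _ (hi.mem_innerNodes (Or.inl rfl)),
    Spider.nodeSum_of_mem_innerNodes _ (hi.mem_innerNodes (Or.inr rfl))⟩

lemma ShortTwisted.block_edges (hi : D.ShortTwisted i) :
    D.block (D.lowEdge (right i, 1)) = 1 ∧ D.block (D.highEdge (right i, 1)) = 7 := by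
  grind [lowEdge, highEdge, block]

lemma LongTwisted.lowEdge_eq (hi : D.LongTwisted i) :
    D.lowEdge (right i, 1) = (right i, 1) ∧ D.highEdge (right i, 1) = (right i, 2) := by
  grind [lowEdge, highEdge, block, LongTwisted, ShortTwisted]

lemma LongTwisted.block_eq (hi : D.LongTwisted i) :
    D.block (right i, 1) = 4 ∧ D.block (right i, 2) = 9 ∧ D.block (right i, 3) = 8 := by
  have := D.rightLen_pos i hi.1.1
  grind [block, LongTwisted, ShortTwisted, Twisted]

lemma LongTwisted.block_left (hi : D.LongTwisted i) : D.block (left i, 1) = 5 := by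
  grind [block, LongTwisted, ShortTwisted, Twisted]

lemma LongTwisted.group_eq (hi : D.LongTwisted i) (j : ℕ) : D.group (right i, j) = 0 := by
  grind [group, LongTwisted, ShortTwisted]

lemma exists_shortTwisted_of_block_eq_seven (he : e ∈ D.edges) (hblock : D.block e = 7) :
    ∃ i, D.ShortTwisted i ∧ e = (right i, 2) := by
  obtain ⟨T, j⟩ := e
  cases T <;> simp only [block, Spider.right_mem_edges] at * <;> grind [ShortTwisted]

lemma exists_longTwisted_of_block_eq_nine (he : e ∈ D.edges) (hblock : D.block e = 9)
    (hgroup : D.group e = 0) : ∃ i, D.LongTwisted i ∧ e = (right i, 2) := by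
  obtain ⟨T, j⟩ := e
  cases T <;> simp only [block, group] at * <;> grind [ShortTwisted, LongTwisted]

lemma ShortTwisted.edgesLE (hi : D.ShortTwisted i) (hv : v ∈ D.innerNodes)
    (hregv : D.Regular v) : D.EdgesLE (right i, 1) v := by
  simp only [EdgesLE, key_le_key]
  grind [hi.block_edges, hregv.block_edges hv]

lemma ShortTwisted.edgesLE_long (hi : D.ShortTwisted i) (hj : D.LongTwisted j) :
    D.EdgesLE (right i, 1) (right j, 1) := by
  simp only [EdgesLE, key_le_key]
  grind [hi.block_edges, hj.block_eq, hj.lowEdge_eq]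

lemma LongTwisted.edgesLE (hi : D.LongTwisted i) (hj : D.LongTwisted j) (hij : i ≤ j) :
    D.EdgesLE (right i, 1) (right j, 1) := by
  simp only [EdgesLE, key_le_key]
  grind [LongTwisted.block_eq, LongTwisted.lowEdge_eq, LongTwisted.group_eq, index, offset]

lemma LongTwisted.edgesLE_or (hi : D.LongTwisted i) (hv : v ∈ D.innerNodes)
    (hregv : D.Regular v) :
    D.EdgesLE (right i, 1) v ∨ D.EdgesLE v (right i, 1) ∨
      ∃ k < i, D.LongTwisted k ∧ v = (right k, 2) := by
  have hiblock := hi.block_eq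
  have hiedges := hi.lowEdge_eq
  rcases hregv.block_edges hv with hvblock | hvblock
  · simp only [EdgesLE, key_le_key, hiedges]
    omega
  by_cases hgroup : D.group (D.highEdge v) = 0
  · obtain ⟨k, hk, hkv⟩ :=
      exists_longTwisted_of_block_eq_nine (highEdge_mem_edges hv) hvblock.2 hgroup
    have hv2 : v = (right k, 2) := by
      obtain ⟨c, hc, hcv, hvc⟩ := D.exists_highEdge_eq v
      obtain ⟨T, j⟩ := v
      grind [Regular, LongTwisted]
    by_cases hki : k < i
    · exact Or.inr (Or.inr ⟨k, hki, hk, hv2⟩)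
    · refine Or.inl ?_
      simp only [EdgesLE, key_le_key]
      grind [index, hi.group_eq 2]
  · refine Or.inl ?_
    simp only [EdgesLE, key_le_key]
    grind [hi.group_eq 2]

lemma ShortTwisted.nodeSum_lt (hi : D.ShortTwisted i) (hj : D.ShortTwisted j) (hij : i < j) :
    D.nodeSum D.label (right j, 1) < D.nodeSum D.label (right i, 1) := by
  set M := {k ∈ Ioo i j | D.ShortTwisted k}
  have hhigh : D.label (right j, 2) ≤ D.label (right i, 2) + (#M + 1) := by
    refine (keyRank_le_add_card (t := insert (right j, 2) (M.image fun k => (right k, 2)))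
      fun e he hie hej => ?_).trans
      (Nat.add_le_add_left ((card_insert_le ..).trans (Nat.add_le_add_right card_image_le _)) _)
    obtain ⟨k, hk, rfl⟩ := exists_shortTwisted_of_block_eq_seven he
      (by grind [key_lt_key, key_le_key, block])
    rw [key_lt_key] at hie
    rw [key_le_key] at hej
    simp only [M, mem_insert, mem_image, mem_filter, mem_Ioo]
    grind [block, group, index, offset, ShortTwisted]
  have hlow : D.label (right j, 1) + (#M + 2) ≤ D.label (right i, 1) := by
    have hcard : #(insert (left i, 1) (insert (right i, 1) (M.image fun k => (right k, 1)))) =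
        #M + 2 := by
      rw [card_insert_of_notMem (by simp), card_insert_of_notMem (by simp [M]),
        card_image_of_injective _ fun k l hkl => by simpa using hkl]
    rw [← hcard]
    refine keyRank_add_card_le ?_ fun e he => ?_
    · rw [key_le_key]
      grind [block, group, ShortTwisted, Twisted]
    · simp only [M, mem_insert, mem_image, mem_filter, mem_Ioo] at he
      rw [key_le_key, key_lt_key]
      have := D.rightCount_lt
      have := D.leftLen_pos i
      rcases he with rfl | rfl | ⟨k, ⟨hk, hks⟩, rfl⟩ <;>
        simp only [block, group, Spider.right_mem_edges, Spider.left_mem_edges, offset, index] <;>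
        grind [ShortTwisted, Twisted]
  have := hi.nodeSum_eq D.label
  have := hj.nodeSum_eq D.label
  omega

lemma LongTwisted.nodeSum_lt (hi : D.LongTwisted i) (hj : D.LongTwisted j) (hij : i < j) :
    D.nodeSum D.label (right j, 1) < D.nodeSum D.label (right i, 2) := by
  have hiblock := hi.block_eq
  have hjblock := hj.block_eq
  set M := {k ∈ Ioc i j | D.LongTwisted k}
  have hhigh : D.label (right j, 2) ≤ D.label (right i, 2) + #M := by
    refine (keyRank_le_add_card (t := M.image fun k => (right k, 2)) fun e he hie hej => ?_).trans
      (Nat.add_le_add_left card_image_le _)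
    rw [key_lt_key, hi.group_eq] at hie
    rw [key_le_key, hj.group_eq] at hej
    obtain ⟨k, hk, rfl⟩ := exists_longTwisted_of_block_eq_nine he (by omega) (by omega)
    simp only [M, mem_image, mem_filter, mem_Ioc]
    grind [index, offset]
  have hlow : D.label (right j, 1) + (#M + 1) ≤ D.label (right i, 3) := by
    have hcard : #(insert (right i, 3) (M.image fun k => (left k, 1))) = #M + 1 := by
      rw [card_insert_of_notMem (by simp),
        card_image_of_injective _ fun k l hkl => by simpa using hkl]
    rw [← hcard]
    refine keyRank_add_card_le (by rw [key_le_key]; omega) fun e he => ?_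
    simp only [M, mem_insert, mem_image, mem_filter, mem_Ioc] at he
    rw [key_le_key, key_lt_key]
    rcases he with rfl | ⟨k, ⟨-, hk⟩, rfl⟩
    · have := D.rightLen_pos i hi.1.1
      rw [Spider.right_mem_edges]
      grind [LongTwisted, Twisted]
    · have := D.rightCount_lt
      have := hk.block_left
      rw [Spider.left_mem_edges]
      grind [LongTwisted, Twisted]
  have := (hi.nodeSum_eq D.label).2
  have := (hj.nodeSum_eq D.label).1
  omega

lemma EdgesLE.eq_of_nodeSum_eq (hu : u ∈ D.innerNodes) (hv : v ∈ D.innerNodes)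
    (huv : D.EdgesLE u v) (hsum : D.nodeSum D.label u = D.nodeSum D.label v) : u = v := by
  rw [nodeSum_eq_lowEdge_add_highEdge hu, nodeSum_eq_lowEdge_add_highEdge hv] at hsum
  have hlow : D.label (D.lowEdge u) ≤ D.label (D.lowEdge v) := keyRank_mono huv.1
  have hhigh : D.label (D.highEdge u) ≤ D.label (D.highEdge v) := keyRank_mono huv.2
  have hinj := (bijOn_keyRank (injOn_key (D := D))).injOn
  have hlow_eq := hinj (lowEdge_mem_edges hu) (lowEdge_mem_edges hv)
    (show D.label _ = D.label _ by omega)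
  have hhigh_eq := hinj (highEdge_mem_edges hu) (highEdge_mem_edges hv)
    (show D.label _ = D.label _ by omega)
  obtain ⟨T, i⟩ := u
  obtain ⟨T', j⟩ := v
  grind [lowEdge, highEdge]

lemma innerNode_cases (u : Node) :
    D.Regular u ∨ (∃ i, D.ShortTwisted i ∧ u = (right i, 1)) ∨
      ∃ i, D.LongTwisted i ∧ u = (right i, 1) := by
  grind [Regular, ShortTwisted, LongTwisted]

lemma injOn_nodeSum_innerNodes : Set.InjOn (D.nodeSum D.label) D.innerNodes := by
  intro u hu v hv huv
  rw [mem_coe] at hu hv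
  have hle := EdgesLE.eq_of_nodeSum_eq hu hv
  have hge := EdgesLE.eq_of_nodeSum_eq hv hu
  rcases innerNode_cases (D := D) u with hureg | ⟨i, hi, rfl⟩ | ⟨i, hi, rfl⟩ <;>
    rcases innerNode_cases (D := D) v with hvreg | ⟨j, hj, rfl⟩ | ⟨j, hj, rfl⟩
  · grind [hureg.edgesLE_or hu hv hvreg]
  · grind [hj.edgesLE hu hureg]
  · rcases hj.edgesLE_or hu hureg with h | h | ⟨k, hkj, hk, rfl⟩
    · exact (hge h huv.symm).symm
    · exact hle h huv
    · exact absurd huv (hk.nodeSum_lt hj hkj).ne'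
  · grind [hi.edgesLE hv hvreg]
  · rcases lt_trichotomy i j with hij | rfl | hij
    · exact absurd huv (hi.nodeSum_lt hj hij).ne'
    · rfl
    · exact absurd huv (hj.nodeSum_lt hi hij).ne
  · grind [hi.edgesLE_long hj]
  · rcases hi.edgesLE_or hv hvreg with h | h | ⟨k, hki, hk, rfl⟩
    · exact hle h huv
    · exact (hge h huv.symm).symm
    · exact absurd huv (hk.nodeSum_lt hi hki).ne
  · grind [hj.edgesLE_long hi]
  · grind [LongTwisted.edgesLE]

lemma block_lt_seven_of_mem_leaves (hu : u ∈ D.leaves) :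
    D.block u < 7 ∨ ∃ i, D.ShortTwisted i ∧ u = (right i, 2) := by
  obtain ⟨T, j⟩ := u
  obtain ⟨he, hcore, hj⟩ := mem_filter.1 hu
  cases T <;>
    simp only [block, Spider.right_mem_edges, Spider.left_mem_edges, Spider.len] at * <;>
    grind [Twisted, ShortTwisted]

lemma seven_lt_block_highEdge (hv : v ∈ D.innerNodes) :
    7 < D.block (D.highEdge v) ∨ ∃ i, D.ShortTwisted i ∧ v = (right i, 1) := by
  rcases innerNode_cases (D := D) v with hreg | ⟨i, hi, rfl⟩ | ⟨i, hi, rfl⟩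
  · have := hreg.block_edges hv
    exact Or.inl (by omega)
  · exact Or.inr ⟨i, hi, rfl⟩
  · rw [hi.lowEdge_eq.2, hi.block_eq.2.1]
    exact Or.inl (by omega)

lemma label_leaf_lt_nodeSum (hu : u ∈ D.leaves) (hv : v ∈ D.innerNodes) :
    D.label u < D.nodeSum D.label v := by
  by_cases hle : D.key u ≤ D.key (D.highEdge v)
  · have hhigh : D.label u ≤ D.label (D.highEdge v) := keyRank_mono hle
    have hlow : 0 < D.label (D.lowEdge v) := keyRank_pos (lowEdge_mem_edges hv)
    rw [nodeSum_eq_lowEdge_add_highEdge hv]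
    omega
  · have hvblock := seven_lt_block_highEdge hv
    rw [key_le_key] at hle
    obtain ⟨k, hk, rfl⟩ : ∃ k, D.ShortTwisted k ∧ u = (right k, 2) :=
      (block_lt_seven_of_mem_leaves hu).resolve_left fun h => hle (Or.inl (by
        rcases hvblock with hv7 | ⟨i, hi, rfl⟩
        · omega
        · rw [hi.block_edges.2]; omega))
    have hk7 : D.block (right k, 2) = 7 := by grind [block]
    obtain ⟨i, hi, rfl⟩ := hvblock.resolve_left (by omega)
    have hik : i < k := by
      have : D.highEdge (right i, 1) = (right i, 2) := by grind [highEdge, block]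
      grind [index, block, group, offset, ShortTwisted]
    have hsum := hi.nodeSum_lt hk hik
    rw [hk.nodeSum_eq] at hsum
    omega

lemma innerNodes_nonempty (D : PivotedSpider) : D.innerNodes.Nonempty := by
  have := D.rightLen_pos D.pivot D.pivot_lt
  have := D.even_pivot
  exact ⟨(right D.pivot, 1), Spider.mem_innerNodes.2
    ⟨D.right_mem_threads.2 D.pivot_lt, le_rfl, by simp only [Spider.len]; omega⟩⟩

/-! ### The two branch vertices -/

lemma block_pivot : D.block (right D.pivot, 1) = 8 := by
  have := D.rightLen_pos D.pivot D.pivot_lt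
  have := D.even_pivot
  grind [block, Twisted, ShortTwisted]

lemma group_pivot : D.group (right D.pivot, 1) = 6 := by
  grind [group, Twisted, ShortTwisted]

variable (D) in
/-- The edges of the legs that are labelled in the last block. -/
def topEdges : Finset Node := {e ∈ D.edges | D.block e = 9 ∧ e.1 ≠ core}

lemma mem_topEdges : e ∈ D.topEdges ↔
    (∃ i < D.leftCount, D.leftLen i ≠ 1 ∧ D.leftLen i % 2 = 1 ∧ e = (left i, 1)) ∨
      ∃ i, D.LongTwisted i ∧ e = (right i, 2) := by
  obtain ⟨T, j⟩ := e
  rw [topEdges, mem_filter]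
  cases T with
  | core => simp
  | left i =>
    simp only [block, Spider.left_mem_edges]
    grind [ShortTwisted, Twisted]
  | right i =>
    simp only [block, Spider.right_mem_edges]
    have := D.rightLen_pos i
    grind [ShortTwisted, LongTwisted, Twisted]

lemma label_le_label_pivot_add (e : Node) :
    D.label e ≤ D.label (right D.pivot, 1) + (#D.topEdges + 1) := by
  refine (keyRank_le_add_card (t := insert (core, 1) D.topEdges) fun x hx hpx _ => ?_).trans
    (Nat.add_le_add_left (card_insert_le ..) _)
  rw [key_lt_key, block_pivot, group_pivot] at hpx
  rw [mem_insert, topEdges, mem_filter]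
  refine or_iff_not_imp_left.2 fun hcore => ⟨hx, ?_⟩
  obtain ⟨T, j⟩ := x
  cases T with
  | core =>
    simp only [block, group, Spider.core_mem_edges] at *
    grind
  | left i =>
    simp only [block, group, Spider.left_mem_edges] at *
    grind
  | right i =>
    simp only [block, group, index, offset, Spider.right_mem_edges] at *
    grind [ShortTwisted]

lemma key_lowEdge_le_key_core (hv : v ∈ D.innerNodes) :
    D.key (D.lowEdge v) ≤ D.key (core, D.coreLen) := by
  have hcore : D.block (core, D.coreLen) = 8 := by
    have := D.coreLen_pos
    grind [block]
  rw [key_le_key, hcore]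
  rcases innerNode_cases (D := D) v with hreg | ⟨i, hi, rfl⟩ | ⟨i, hi, rfl⟩
  · rcases hreg.block_edges hv with hblock | hblock
    · omega
    · have hedges := hreg.group_index_edges hv
      by_cases hcore : v.1 = core
      · obtain ⟨c, hc, -, hcv⟩ := D.exists_lowEdge_eq v
        obtain ⟨d, hd, -, -⟩ := D.exists_highEdge_eq v
        obtain ⟨T, j⟩ := v
        obtain rfl : T = core := hcore
        have := (Spider.mem_innerNodes.1 hv).2
        rw [hc]
        rw [hd] at hblock
        simp only [block, group, index, offset, Spider.len] at *
        grind
      · have hfst : (D.highEdge v).1 = v.1 := by grind [highEdge]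
        have htop : D.highEdge v ∈ D.topEdges :=
          mem_filter.2 ⟨highEdge_mem_edges hv, hblock.2, hfst ▸ hcore⟩
        have hgroup : D.group (D.highEdge v) ≤ 1 := by
          rcases mem_topEdges.1 htop with ⟨i, -, hne, hodd, h⟩ | ⟨i, hi, h⟩ <;>
            rw [h] <;> grind [group, ShortTwisted, Twisted, LongTwisted]
        have : 2 ≤ D.group (core, D.coreLen) := by grind [group]
        omega
  · rw [hi.block_edges.1]
    omega
  · rw [hi.lowEdge_eq.1, hi.block_eq.1]
    omega

lemma block_group_of_mem_topEdges (he : e ∈ D.topEdges) :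
    (e.1, e.2 + 2) ∈ D.edges ∧ D.block (e.1, e.2 + 2) = 2 ∧ D.group (e.1, e.2 + 2) ≤ 1 := by
  rcases mem_topEdges.1 he with ⟨i, hi, hi1, hodd, rfl⟩ | ⟨i, hi, rfl⟩
  · simp only [block, group, Spider.left_mem_edges]
    grind [ShortTwisted, Twisted]
  · have := D.rightLen_pos i hi.1.1
    simp only [block, group, Spider.right_mem_edges]
    grind [LongTwisted, ShortTwisted, Twisted]

lemma exists_light_key_lt (hi : i < D.rightCount) (hip : i ≠ D.pivot)
    (hshort : ¬D.ShortTwisted i) : ∃ w ∈ D.edges, D.block w = 2 ∧ 1 < D.group w ∧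
      D.key w < D.key (right i, 1) := by
  have := D.rightLen_pos i hi
  simp only [key_lt_key]
  by_cases hodd : D.rightLen i % 2 = 1 ∧ D.rightLen i ≠ 1
  · refine ⟨(right i, 3), ?_⟩
    simp only [block, group, index, offset, Spider.right_mem_edges]
    grind [ShortTwisted, Twisted]
  · have := D.rightLen_pos D.pivot D.pivot_lt
    have := D.even_pivot
    have := D.pivot_lt
    refine ⟨(right D.pivot, 2), ?_⟩
    simp only [block, group, index, offset, Spider.right_mem_edges]
    grind [ShortTwisted, Twisted]

lemma card_topEdges_add_two_le (hi : i < D.rightCount) (hip : i ≠ D.pivot)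
    (hshort : ¬D.ShortTwisted i) : #D.topEdges + 2 ≤ D.label (right i, 1) := by
  obtain ⟨w, hw, hblock, hgroup, hlt⟩ := exists_light_key_lt hi hip hshort
  have hi_edge : (right i, 1) ∈ D.edges :=
    Spider.right_mem_edges.2 ⟨hi, le_rfl, D.rightLen_pos i hi⟩
  have himage {e : Node} (he : e ∈ D.topEdges.image fun e => (e.1, e.2 + 2)) :
      e ∈ D.edges ∧ D.key e < D.key w := by
    obtain ⟨x, hx, rfl⟩ := mem_image.1 he
    obtain ⟨hx_edge, hx_block, hx_group⟩ := block_group_of_mem_topEdges hx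
    exact ⟨hx_edge, key_lt_key.2 (by omega)⟩
  have hcard : #(insert (right i, 1) (insert w (D.topEdges.image fun e => (e.1, e.2 + 2)))) =
      #D.topEdges + 2 := by
    rw [card_insert_of_notMem, card_insert_of_notMem, card_image_of_injective]
    · rintro ⟨T, j⟩ ⟨T', j'⟩ h
      simpa using h
    · exact fun h => (himage h).2.false
    · rw [mem_insert, not_or]
      exact ⟨fun h => (h ▸ hlt).false, fun h => ((himage h).2.trans hlt).false⟩
  rw [← hcard]
  refine card_le_keyRank fun e he => ?_
  rcases mem_insert.1 he with rfl | he
  · exact ⟨hi_edge, le_rfl⟩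
  rcases mem_insert.1 he with rfl | he
  · exact ⟨hw, hlt.le⟩
  · exact ⟨(himage he).1, ((himage he).2.trans hlt).le⟩

lemma exists_card_topEdges_add_two_le :
    ∃ i < D.rightCount, i ≠ D.pivot ∧ #D.topEdges + 2 ≤ D.label (right i, 1) := by
  by_cases hshort : ∃ i < D.rightCount, i ≠ D.pivot ∧ ¬D.ShortTwisted i
  · obtain ⟨i, hi, hip, hi_short⟩ := hshort
    exact ⟨i, hi, hip, card_topEdges_add_two_le hi hip hi_short⟩
  push Not at hshort
  obtain ⟨i, hi, hip⟩ : ∃ i < D.rightCount, i ≠ D.pivot := by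
    have := D.two_le_rightCount
    by_cases hp : D.pivot = 0
    · exact ⟨1, by omega, by omega⟩
    · exact ⟨0, by omega, by omega⟩
  have hi_short := hshort i hi hip
  have htop : D.topEdges = ∅ := by
    refine eq_empty_of_forall_notMem fun e he => ?_
    have := D.pivot_matching
    rw [mem_topEdges] at he
    grind [ShortTwisted, LongTwisted, Twisted]
  refine ⟨i, hi, hip, ?_⟩
  have hpair : #{(left i, 1), (right i, 1)} = 2 := card_pair (by simp)
  rw [htop, card_empty, zero_add, ← hpair]
  refine card_le_keyRank (key := D.key) fun e he => ?_
  have := D.rightCount_lt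
  have := D.leftLen_pos i
  rw [mem_insert, mem_singleton] at he
  rcases he with rfl | rfl <;>
    simp only [key_le_key, Spider.left_mem_edges, Spider.right_mem_edges, block, group, index,
      offset] <;>
    grind [ShortTwisted, Twisted]

theorem nodeSum_lt_nodeSum_right (hv : v ∈ D.innerNodes) :
    D.nodeSum D.label v < D.nodeSum D.label (core, D.coreLen) := by
  obtain ⟨r, hr, hrp, hlabel⟩ := exists_card_topEdges_add_two_le (D := D)
  have hsum : ∑ i ∈ {r, D.pivot}, D.label (right i, 1) ≤
      ∑ i ∈ range D.rightCount, D.label (right i, 1) :=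
    sum_le_sum_of_subset (by
      have := D.pivot_lt
      grind)
  have hlow : D.label (D.lowEdge v) ≤ D.label (core, D.coreLen) :=
    keyRank_mono (key_lowEdge_le_key_core hv)
  have hhigh := label_le_label_pivot_add (D := D) (D.highEdge v)
  rw [sum_pair hrp] at hsum
  rw [nodeSum_eq_lowEdge_add_highEdge hv, Spider.nodeSum_right]
  omega

variable (D) in
/-- The matched pairs of legs whose first edges are labelled in block `1`. -/
def shortTwisted : Finset ℕ := {i ∈ range D.rightCount | D.ShortTwisted i}

variable (D) in
/-- The light edges. -/
def lightEdges : Finset Node := {e ∈ D.edges | D.block e = 2}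

variable (D) in
/-- The heavy edges, except the one of the core at `v_r`. -/
def heavyEdges : Finset Node := {e ∈ D.edges | D.block e = 8}.erase (core, D.coreLen)

variable (D) in
/-- What remains of the comparison of the vertex sums at `v_r` and `v_l` once every leg at `v_r`
other than the pivot is bounded by the leg matched with it. -/
def PivotInequality : Prop :=
  D.label (core, D.coreLen) + D.label (right D.pivot, 1) + #D.shortTwisted <
    D.label (core, 1) + D.label (left D.pivot, 1) + D.label (left D.rightCount, 1)

lemma label_lt_label (he : e' ∈ D.edges) (h : D.key e < D.key e') : D.label e < D.label e' :=
  keyRank_lt_keyRank he h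

lemma block_left_of_odd (hne : D.leftLen i ≠ 1) (hodd : D.leftLen i % 2 = 1) :
    D.block (left i, 1) = 9 := by
  grind [block, ShortTwisted, Twisted]

lemma block_left_of_even (hi : i < D.leftCount) (heven : D.leftLen i % 2 = 0) :
    D.block (left i, 1) = 8 ∧ D.group (left i, 1) = 5 := by
  have := D.leftLen_pos i hi
  grind [block, group, ShortTwisted, Twisted]

lemma block_core : D.block (core, D.coreLen) = 8 := by
  have := D.coreLen_pos
  grind [block]

lemma label_right_le (hi : i < D.rightCount) (hip : i ≠ D.pivot) :
    D.label (right i, 1) ≤ D.label (left i, 1) + if D.ShortTwisted i then 1 else 0 := by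
  have := D.rightLen_pos i hi
  split_ifs with hshort
  · rw [← card_singleton (right i, 1)]
    refine keyRank_le_add_card fun e he hle hge => ?_
    rw [key_lt_key] at hle
    rw [key_le_key] at hge
    obtain ⟨T, j⟩ := e
    cases T <;>
      simp only [block, group, index, offset, Spider.right_mem_edges, Spider.left_mem_edges,
        mem_singleton] at * <;>
      grind [ShortTwisted, Twisted]
  · have := D.rightCount_lt
    refine keyRank_mono (key_le_key.2 ?_)
    rcases eq_or_ne (D.leftLen i) 1 with hunit | hunit
    · grind [block, ShortTwisted, Twisted]
    · rcases Nat.mod_two_eq_zero_or_one (D.leftLen i) with heven | hodd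
      · rw [(block_left_of_even (by omega) heven).1, (block_left_of_even (by omega) heven).2]
        grind [block, group, Twisted]
      · rw [block_left_of_odd hunit hodd]
        grind [block, Twisted]

lemma nodeSum_right_lt_nodeSum_left_of_pivot (h : D.PivotInequality) :
    D.nodeSum D.label (core, D.coreLen) < D.nodeSum D.label (core, 0) := by
  have hpivot : D.pivot ∈ range D.rightCount := mem_range.2 D.pivot_lt
  have hmatched : ∑ i ∈ (range D.rightCount).erase D.pivot, D.label (right i, 1) ≤
      ∑ i ∈ (range D.rightCount).erase D.pivot, D.label (left i, 1) + #D.shortTwisted := by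
    rw [shortTwisted, card_filter]
    refine (sum_le_sum fun i hi => label_right_le (mem_range.1 (mem_of_mem_erase hi))
      (ne_of_mem_erase hi)).trans ?_
    rw [sum_add_distrib]
    gcongr
    exact erase_subset _ _
  have hleft : ∑ i ∈ range (D.rightCount + 1), D.label (left i, 1) ≤
      ∑ i ∈ range D.leftCount, D.label (left i, 1) :=
    sum_le_sum_of_subset (range_subset_range.2 D.rightCount_lt)
  rw [sum_range_succ, ← add_sum_erase _ _ hpivot] at hleft
  rw [PivotInequality] at h
  rw [Spider.nodeSum_right, Spider.nodeSum_left, ← add_sum_erase _ _ hpivot]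
  omega

lemma succ_mem_lightEdges (he : e ∈ D.heavyEdges) :
    (e.1, e.2 + 1) ∈ D.lightEdges := by
  obtain ⟨T, j⟩ := e
  rw [heavyEdges, mem_erase, mem_filter] at he
  rw [lightEdges, mem_filter]
  cases T <;>
    simp only [block, Spider.core_mem_edges, Spider.right_mem_edges,
      Spider.left_mem_edges] at * <;>
    grind [ShortTwisted, Twisted]

lemma card_heavyEdges_le : #D.heavyEdges ≤ #D.lightEdges :=
  card_le_card_of_injOn (fun e => (e.1, e.2 + 1)) (fun _ => succ_mem_lightEdges)
    fun ⟨T, j⟩ _ ⟨T', j'⟩ _ h => by simpa using h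

lemma key_core_le : D.key (core, D.coreLen) ≤ D.key (core, 1) := by
  have := D.coreLen_pos
  simp only [key_le_key, block, group, index, offset]
  grind

lemma card_lightEdges_lt_label (he : e ∈ D.edges) (hblock : 2 < D.block e) :
    #D.lightEdges < D.label e := by
  rw [Nat.lt_iff_add_one_le, ← card_insert_of_notMem (show e ∉ D.lightEdges by grind [lightEdges])]
  refine card_le_keyRank fun x hx => ?_
  rw [key_le_key]
  grind [lightEdges]

lemma label_pivot_le_label_left_pivot_add (heven : D.leftLen D.pivot % 2 = 0) :
    D.label (right D.pivot, 1) ≤ D.label (left D.pivot, 1) + #D.heavyEdges := by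
  refine keyRank_le_add_card fun x hx hpx hxM => ?_
  obtain ⟨hp_block, hp_group⟩ := block_left_of_even (D.pivot_lt.trans D.rightCount_lt) heven
  have hC_group : D.group (core, D.coreLen) ≠ 5 ∧ D.group (core, D.coreLen) ≠ 6 := by
    grind [group]
  rw [key_lt_key, hp_block, hp_group] at hpx
  rw [key_le_key, block_pivot, group_pivot] at hxM
  grind [heavyEdges]

lemma core_one_mem_edges (D : PivotedSpider) : (core, 1) ∈ D.edges :=
  Spider.core_mem_edges.2 ⟨le_rfl, D.coreLen_pos⟩

lemma left_one_mem_edges (hi : i < D.leftCount) : (left i, 1) ∈ D.edges :=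
  Spider.left_mem_edges.2 ⟨hi, le_rfl, D.leftLen_pos i hi⟩

lemma label_pivot_lt_label_core (heven : D.coreLen % 2 = 0) :
    D.label (right D.pivot, 1) < D.label (core, 1) :=
  label_lt_label D.core_one_mem_edges (key_lt_key.2 (by grind [block, block_pivot]))

lemma label_core_lt_label_left (heven : D.coreLen % 2 = 0) (hi : i < D.leftCount)
    (hne : D.leftLen i ≠ 1) : D.label (core, D.coreLen) < D.label (left i, 1) := by
  refine label_lt_label (left_one_mem_edges hi) (key_lt_key.2 ?_)
  rw [block_core]
  rcases Nat.mod_two_eq_zero_or_one (D.leftLen i) with hi_even | hi_odd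
  · grind [block_left_of_even, group]
  · grind [block_left_of_odd]

lemma pivotInequality_of_forall_ne_one
    (hmatch : ∀ i < D.rightCount, D.rightLen i % 2 = 0 → D.leftLen i ≠ 1)
    (hparity : D.leftLen D.pivot % 2 = 0 →
      ∀ i < D.leftCount, D.leftLen i ≠ 1 → D.leftLen i % 2 = 0) : D.PivotInequality := by
  rw [PivotInequality]
  have hb := D.rightCount_lt
  have hp : D.pivot < D.leftCount := D.pivot_lt.trans hb
  have hunit := hmatch _ D.pivot_lt D.even_pivot
  have hshort : #D.shortTwisted = 0 := by
    rw [card_eq_zero, shortTwisted, filter_eq_empty_iff]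
    grind [ShortTwisted, Twisted]
  have hb_pos : 0 < D.label (left D.rightCount, 1) := keyRank_pos (left_one_mem_edges hb)
  by_cases heven : D.coreLen % 2 = 0
  · have hM := label_pivot_lt_label_core heven
    have hC := label_core_lt_label_left heven hp hunit
    omega
  have hC : D.label (core, D.coreLen) ≤ D.label (core, 1) := keyRank_mono key_core_le
  by_cases hodd : D.leftLen D.pivot % 2 = 1
  · have hM : D.label (right D.pivot, 1) < D.label (left D.pivot, 1) :=
      label_lt_label (left_one_mem_edges hp) (key_lt_key.2 (by
        rw [block_pivot, block_left_of_odd hunit hodd]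
        omega))
    omega
  · have hM := label_pivot_le_label_left_pivot_add (D := D) (by omega)
    have hheavy := card_heavyEdges_le (D := D)
    have hlight := card_lightEdges_lt_label (left_one_mem_edges hb) (by
      have := hparity (by omega) _ hb
      rcases eq_or_ne (D.leftLen D.rightCount) 1 with hone | hone
      · grind [block, ShortTwisted, Twisted]
      · grind [block_left_of_even])
    omega

lemma card_lightEdges_add_lt_label_left_pivot (hunit : D.leftLen D.pivot = 1) :
    #D.lightEdges + 2 * #D.shortTwisted < D.label (left D.pivot, 1) := by
  set F := D.shortTwisted.image (fun i => (left i, 1)) ∪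
    D.shortTwisted.image fun i => (right i, 1)
  have hp := D.pivot_lt
  have hb := D.rightCount_lt
  have hF {e : Node} (he : e ∈ F) : e ∈ D.edges ∧ D.block e = 1 := by
    simp only [F, shortTwisted, mem_union, mem_image, mem_filter] at he
    rcases he with ⟨i, ⟨-, hi⟩, rfl⟩ | ⟨i, ⟨-, hi⟩, rfl⟩ <;>
      simp only [block, Spider.left_mem_edges, Spider.right_mem_edges] <;>
      grind [ShortTwisted, Twisted]
  have hFcard : #F = 2 * #D.shortTwisted := by
    rw [card_union_of_disjoint, card_image_of_injective, card_image_of_injective, two_mul]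
    · exact fun i j h => by simpa using h
    · exact fun i j h => by simpa using h
    · simp [disjoint_left]
  have hblock : D.block (left D.pivot, 1) = 6 := by grind [block, ShortTwisted, Twisted]
  have hcard : #(insert (left D.pivot, 1) (D.lightEdges ∪ F)) =
      #D.lightEdges + 2 * #D.shortTwisted + 1 := by
    rw [card_insert_of_notMem, card_union_of_disjoint, hFcard]
    · grind [disjoint_left, lightEdges]
    · grind [lightEdges]
  rw [Nat.lt_iff_add_one_le, ← hcard]
  refine card_le_keyRank fun x hx => ?_
  have := left_one_mem_edges (hp.trans hb)
  rw [key_le_key]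
  grind [lightEdges]

lemma key_le_key_left_rightCount (hunit : D.leftLen D.rightCount = 1) (he : e ∈ D.edges)
    (hblock : D.block e ≤ 6) : D.key e ≤ D.key (left D.rightCount, 1) := by
  have hb_block : D.block (left D.rightCount, 1) = 6 := by
    grind [block, ShortTwisted, Twisted]
  rw [key_le_key, hb_block]
  rcases hblock.lt_or_eq with hlt | heq
  · exact Or.inl hlt
  · have := D.pivot_lt
    obtain ⟨T, j⟩ := e
    cases T <;>
      simp only [block, group, index, offset, Spider.left_mem_edges] at * <;>
      grind [ShortTwisted, Twisted]

lemma label_le_label_left_rightCount_add (hunit : D.leftLen D.rightCount = 1)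
    (he : D.block e = 8) : D.label e ≤ D.label (left D.rightCount, 1) +
      (#D.lightEdges + #D.shortTwisted + 1) := by
  set F := D.shortTwisted.image fun i => (right i, 2)
  have hcard : #(insert (core, D.coreLen) (D.heavyEdges ∪ F)) ≤
      #D.lightEdges + #D.shortTwisted + 1 := by
    have hF : #F ≤ #D.shortTwisted := card_image_le
    have := card_heavyEdges_le (D := D)
    have := card_insert_le (core, D.coreLen) (D.heavyEdges ∪ F)
    have := card_union_le D.heavyEdges F
    omega
  refine (keyRank_le_add_card fun x hx hbx hxe => ?_).trans (Nat.add_le_add_left hcard _)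
  have hx_block : 6 < D.block x := by
    by_contra hle
    exact hbx.not_ge (key_le_key_left_rightCount hunit hx (by omega))
  rw [key_le_key, he] at hxe
  simp only [mem_insert, mem_union]
  rcases (show D.block x = 7 ∨ D.block x = 8 by omega) with h7 | h8
  · obtain ⟨i, hi, rfl⟩ := exists_shortTwisted_of_block_eq_seven hx h7
    exact Or.inr (Or.inr (mem_image_of_mem _ (mem_filter.2 ⟨mem_range.2 hi.1.1, hi⟩)))
  · grind [heavyEdges]

lemma pivotInequality_of_eq_one (hp_unit : D.leftLen D.pivot = 1)
    (hb_unit : D.leftLen D.rightCount = 1) : D.PivotInequality := by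
  rw [PivotInequality]
  have hlower := card_lightEdges_add_lt_label_left_pivot hp_unit
  have hM_block := block_pivot (D := D)
  have hM_group := group_pivot (D := D)
  have hC_block := block_core (D := D)
  have hM := label_le_label_left_rightCount_add hb_unit hM_block
  have hC := label_le_label_left_rightCount_add hb_unit hC_block
  by_cases heven : D.coreLen % 2 = 0
  · have hM_lt := label_pivot_lt_label_core heven
    omega
  by_cases hone : D.coreLen = 1
  · have hM_lt : D.label (right D.pivot, 1) < D.label (core, 1) :=
      label_lt_label D.core_one_mem_edges (key_lt_key.2 (by grind [block, group]))
    rw [hone] at hC ⊢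
    omega
  · have hC_lt : D.label (core, D.coreLen) < D.label (core, 1) :=
      label_lt_label D.core_one_mem_edges (key_lt_key.2 (by grind [block, group, index, offset]))
    omega

theorem nodeSum_right_lt_nodeSum_left :
    D.nodeSum D.label (core, D.coreLen) < D.nodeSum D.label (core, 0) := by
  refine nodeSum_right_lt_nodeSum_left_of_pivot ?_
  rcases D.pivot_matching with ⟨hp, hb, -⟩ | ⟨hmatch, hparity⟩
  · exact pivotInequality_of_eq_one hp hb
  · exact pivotInequality_of_forall_ne_one hmatch hparity

theorem isStronglyAntimagic {L R : List ℕ} (I : D.Indexing L R) :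
    IsStronglyAntimagic (DoubleSpider D.coreLen L R) := by
  have hbij : Set.BijOn D.label D.edges (Set.Icc 1 #D.edges) := bijOn_keyRank injOn_key
  have hleaves : Set.InjOn D.label D.leaves :=
    hbij.injOn.mono (coe_subset.2 (filter_subset _ _))
  exact I.isStronglyAntimagic hbij fun _ _ hu hv =>
    Spider.nodeSum_lt_and_injective D.two_le_rightCount D.rightCount_lt hleaves
      injOn_nodeSum_innerNodes (fun _ hu _ hv => label_leaf_lt_nodeSum hu hv)
      (innerNodes_nonempty D) (fun _ => nodeSum_lt_nodeSum_right) nodeSum_right_lt_nodeSum_left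
      hu hv

end PivotedSpider

/-- Let `DS(L, Pᶜᵒʳᵉ, R)` be a double spider with
`deg(v_l) > deg(v_r) ≥ 3` such that `R` contains at least one leg of even length.
Then `DS(L, Pᶜᵒʳᵉ, R)` is strongly antimagic. -/
theorem doubleSpider_right_even_isStronglyAntimagic (s : ℕ) (hs : 1 ≤ s) (L R : List ℕ)
    (hL : ∀ ℓ ∈ L, 1 ≤ ℓ) (hR : ∀ ℓ ∈ R, 1 ≤ ℓ)
    (hlr : (DoubleSpider s L R).degree (vR s L R) < (DoubleSpider s L R).degree (vL s L R))
    (hr : 3 ≤ (DoubleSpider s L R).degree (vR s L R))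
    (heven : ∃ ℓ ∈ R, Even ℓ) :
    IsStronglyAntimagic (DoubleSpider s L R) := by
  obtain ⟨D, rfl, hsorted, ⟨I⟩⟩ := exists_isSorted_indexing hs hL hR
  rw [I.degree_vR] at hr
  rw [I.degree_vL, I.degree_vR] at hlr
  have hpivot : ∃ i < D.rightCount, D.rightLen i % 2 = 0 := by
    obtain ⟨ℓ, hℓ, heven⟩ := heven
    obtain ⟨i, rfl⟩ := List.get_of_mem hℓ
    exact ⟨I.right i, (I.right i).2, by rw [I.rightLen_right, Nat.even_iff.1 heven]⟩
  obtain ⟨P, rfl⟩ := hsorted.exists_pivot (by omega) (by omega) hpivot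
  exact P.isStronglyAntimagic I

end
end
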